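/- For every positive integer m there exists a constant A_m > 0 depending only on m with the following property. Let 0 < R, let f(z) = Σ_{k≥0} a_k z^k be analytic in the open disk D_R = {z ∈ ℂ : |z| < R} (with Taylor series converging on a disk of radius strictly larger than R), let s ≥ 0 and p ≥ s+1 be integers, set m = p − s, and suppose f is (s,p)-valent in D_R. Then the lower s-truncation f̂(z) = Σ_{k≥1} a_{s+k} z^k possesses the (m, R, S(k))-Taylor domination property with S(k) = (A_m·k/m)^{2m}; that is, for every k ≥ m+1, |a_{s+k}| R^k ≤ (A_m·k/m)^{2m} · max_{1≤i≤m} |a_{s+i}| R^i. -/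

import Mathlib

-- The order of vanishing of `g` at `z` (zero if `g` is not analytic at `z`).
open scoped Classical in
noncomputable def ordAt (g : ℂ → ℂ) (z : ℂ) : ℕ∞ :=
  if h : AnalyticAt ℂ g z then analyticOrderAt g z else 0

/-- The number of zeroes of `g` in `Ω`, counted with multiplicity. -/
noncomputable def solCount (g : ℂ → ℂ) (Ω : Set ℂ) : ℕ∞ :=
  ∑' z : Ω, ordAt g z

/-- `f` is `(s,p)`-valent in `Ω`: for every polynomial `P` of degree at most `s`,
the equation `f = P` has at most `p` solutions in `Ω`, counted with multiplicity. -/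
def IsSPValentOn (f : ℂ → ℂ) (Ω : Set ℂ) (s p : ℕ) : Prop :=
  ∀ P : Polynomial ℂ, P.degree ≤ (s : ℕ) →
    solCount (fun z => f z - P.eval z) Ω ≤ (p : ℕ∞)

/-!
The proof is the length–area method. If `G` takes every value at most `p` times, then
`∫ |G'|² φ(G) ≤ p ∫ φ`; with `φ(w) = 1 / |w|²` on the annulus `A ≤ |w| ≤ B` and the Cauchy–Schwarz
inequality, a rectangle of height `h` and width `ℓ` all of whose vertical segments cross the annulus
satisfies `log (B / A) ≤ 2 π p h / ℓ`. Transplanting the disk to the strip `|Im w| < π / 2` turns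
this into the growth bound `|f z| ≤ C M ((R + |z|) / (R - |z|)) ^ (2 p)`, as soon as each circle of
radius between `R / 4` and `R / 2` carries a point where `|f| ≤ M`.

For `f - a₀` such points come from dividing out its at most `p` zeros: if `f - a₀ = Q G` with `G`
zero-free, Cauchy's estimate for the Taylor polynomial of `f - a₀` divided by `G` bounds `G` at a
point of the circle in terms of `a₁, …, aₚ`. Cauchy's estimate on `|z| = R k / (k + 1)` then bounds
`aₖ`.

An `(s, s + m)`-valent `f` reduces to `s = 0`: with `g = ∑ aₛ₊ₖ zᵏ`, the polynomial
`P = a₀ + ⋯ + aₛ₋₁ zˢ⁻¹ + c zˢ` gives `f - P = zˢ (g - c)`, so `g - c` has at most `m` zeros.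
-/

open MeasureTheory Set Filter Topology
open scoped ENNReal

/-- `f` takes every value at most `p` times in `Ω`, solutions being counted without multiplicity. -/
def IsMultivalentOn {α β : Type*} (f : α → β) (Ω : Set α) (p : ℕ) : Prop :=
  ∀ w, {z ∈ Ω | f z = w}.encard ≤ p

namespace IsMultivalentOn

variable {α β γ : Type*} {f : α → β} {Ω : Set α} {p : ℕ}

lemma mono (hf : IsMultivalentOn f Ω p) {Ω' : Set α} (h : Ω' ⊆ Ω) : IsMultivalentOn f Ω' p :=
  fun w => (encard_le_encard (t := {z ∈ Ω | f z = w}) fun _ hz => ⟨h hz.1, hz.2⟩).trans (hf w)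

lemma comp_injOn (hf : IsMultivalentOn f Ω p) {g : γ → α} {Ω' : Set γ} (hg : MapsTo g Ω' Ω)
    (hinj : InjOn g Ω') : IsMultivalentOn (fun z => f (g z)) Ω' p :=
  fun w => (encard_le_encard_of_injOn (t := {z ∈ Ω | f z = w}) (fun _ hz => ⟨hg hz.1, hz.2⟩)
    (hinj.mono fun _ hz => hz.1)).trans (hf w)

lemma pos_of_nonempty (hf : IsMultivalentOn f Ω p) (hΩ : Ω.Nonempty) : 0 < p := by
  obtain ⟨z, hz⟩ := hΩ
  have hcard : 0 < {x ∈ Ω | f x = f z}.encard := encard_pos.2 ⟨z, hz, rfl⟩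
  exact_mod_cast hcard.trans_le (hf (f z))

lemma encard_setOf_mem_image_le (hf : IsMultivalentOn f Ω p) {ι : Type*} {D : ι → Set α}
    (hD : Pairwise (Function.onFun Disjoint D)) (hDΩ : ∀ i, D i ⊆ Ω) (w : β) :
    {i | w ∈ f '' D i}.encard ≤ p := by
  choose z hzD hzw using fun i : {i | w ∈ f '' D i} => i.2
  have hz : Function.Injective z := fun i j hij =>
    Subtype.ext (hD.eq (not_disjoint_iff.2 ⟨z i, hzD i, hij ▸ hzD j⟩))
  let e : {i | w ∈ f '' D i} ↪ {x ∈ Ω | f x = w} :=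
    ⟨fun i => ⟨z i, hDΩ i (hzD i), hzw i⟩, fun i j hij => hz (congrArg Subtype.val hij)⟩
  exact e.encard_le.trans (hf w)

lemma tsum_indicator_image_le (hf : IsMultivalentOn f Ω p) {ι : Type*} {D : ι → Set α}
    (hD : Pairwise (Function.onFun Disjoint D)) (hDΩ : ∀ i, D i ⊆ Ω) (φ : β → ℝ≥0∞) (w : β) :
    ∑' i, (f '' D i).indicator φ w ≤ p * φ w := by
  calc ∑' i, (f '' D i).indicator φ w
      = ∑' i, {i | w ∈ f '' D i}.indicator (fun _ => φ w) i := rfl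
    _ = {i | w ∈ f '' D i}.encard * φ w := by rw [← tsum_subtype, ENNReal.tsum_set_const]
    _ ≤ p * φ w := by
      gcongr
      exact_mod_cast ENat.toENNReal_le.2 (hf.encard_setOf_mem_image_le hD hDΩ w)

end IsMultivalentOn

lemma exists_measurable_partition_injOn {X Y : Type*} [TopologicalSpace X]
    [SecondCountableTopology X] [MeasurableSpace X] [OpensMeasurableSpace X] {f : X → Y}
    {Ω : Set X} (hΩ : MeasurableSet Ω) (hf : ∀ x ∈ Ω, ∃ V ∈ 𝓝 x, InjOn f V) :
    ∃ D : ℕ → Set X, (∀ n, MeasurableSet (D n)) ∧ Pairwise (Function.onFun Disjoint D) ∧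
      (∀ n, InjOn f (D n)) ∧ ⋃ n, D n = Ω := by
  choose! V hV hinj using hf
  obtain ⟨T, hTΩ, hT, hcover⟩ := TopologicalSpace.countable_cover_nhdsWithin (s := Ω)
    (f := fun x => interior (V x)) fun x hx =>
      mem_nhdsWithin_of_mem_nhds (interior_mem_nhds.2 (hV x hx))
  rcases T.eq_empty_or_nonempty with rfl | hne
  · obtain rfl : Ω = ∅ := by simpa using hcover
    exact ⟨fun _ => ∅, by simp, fun _ _ _ => disjoint_empty _, by simp, by simp⟩
  obtain ⟨x, rfl⟩ := hT.exists_eq_range hne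
  have hx : ∀ n, x n ∈ Ω := fun n => hTΩ (mem_range_self n)
  let W : ℕ → Set X := fun n => Ω ∩ interior (V (x n))
  refine ⟨disjointed W, MeasurableSet.disjointed fun n => hΩ.inter isOpen_interior.measurableSet,
    disjoint_disjointed W, fun n => (hinj _ (hx n)).mono ?_, ?_⟩
  · exact (disjointed_subset W n).trans (inter_subset_right.trans interior_subset)
  · rw [iUnion_disjointed, ← inter_iUnion, inter_eq_left]
    simpa using hcover

lemma ofReal_abs_det_toSpanSingleton_restrictScalars (c : ℂ) :
    ENNReal.ofReal |((ContinuousLinearMap.toSpanSingleton ℂ c).restrictScalars ℝ).det| =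
      ‖c‖ₑ ^ 2 := by
  have hdet : ((ContinuousLinearMap.toSpanSingleton ℂ c).restrictScalars ℝ).det = ‖c‖ ^ 2 := by
    simp [ContinuousLinearMap.det, LinearMap.det_restrictScalars, Algebra.norm_complex_eq,
      Complex.normSq_eq_norm_sq]
  rw [hdet, abs_of_nonneg (by positivity), ENNReal.ofReal_pow (norm_nonneg _), ofReal_norm]

lemma lintegral_image_eq_lintegral_enorm_deriv_sq_mul {f : ℂ → ℂ} {D : Set ℂ}
    (hD : MeasurableSet D) (hf : ∀ z ∈ D, DifferentiableAt ℂ f z) (hinj : InjOn f D)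
    (φ : ℂ → ℝ≥0∞) :
    ∫⁻ w in f '' D, φ w = ∫⁻ z in D, ‖deriv f z‖ₑ ^ 2 * φ (f z) := by
  rw [lintegral_image_eq_lintegral_abs_det_fderiv_mul volume hD
    (fun z hz => ((hf z hz).hasDerivAt.hasFDerivAt.restrictScalars ℝ).hasFDerivWithinAt) hinj]
  simp_rw [ofReal_abs_det_toSpanSingleton_restrictScalars]

lemma exists_mem_nhds_injOn_of_deriv_ne_zero {f : ℂ → ℂ} {z : ℂ} (hf : AnalyticAt ℂ f z)
    (hz : deriv f z ≠ 0) : ∃ V ∈ 𝓝 z, InjOn f V :=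
  ⟨_, hf.hasStrictDerivAt.eventually_left_inverse hz, fun x hx y hy hxy => by
    rw [← hx, ← hy, hxy]⟩

lemma lintegral_enorm_deriv_sq_mul_le_of_deriv_ne_zero {f : ℂ → ℂ} {Ω : Set ℂ} {p : ℕ}
    (hΩ : IsOpen Ω) (hf : DifferentiableOn ℂ f Ω) (hp : IsMultivalentOn f Ω p)
    (hne : ∀ z ∈ Ω, deriv f z ≠ 0) {φ : ℂ → ℝ≥0∞} (hφ : Measurable φ) :
    ∫⁻ z in Ω, ‖deriv f z‖ₑ ^ 2 * φ (f z) ≤ p * ∫⁻ w, φ w := by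
  have hdiff : ∀ z ∈ Ω, DifferentiableAt ℂ f z := fun z hz => hf.differentiableAt (hΩ.mem_nhds hz)
  obtain ⟨D, hDm, hDd, hDinj, hDΩ⟩ := exists_measurable_partition_injOn hΩ.measurableSet
    fun z hz => exists_mem_nhds_injOn_of_deriv_ne_zero (hf.analyticAt (hΩ.mem_nhds hz)) (hne z hz)
  have hsub : ∀ n, D n ⊆ Ω := fun n => hDΩ ▸ subset_iUnion D n
  have himage : ∀ n, MeasurableSet (f '' D n) := fun n =>
    (hDm n).image_of_continuousOn_injOn (hf.continuousOn.mono (hsub n)) (hDinj n)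
  calc ∫⁻ z in Ω, ‖deriv f z‖ₑ ^ 2 * φ (f z)
      = ∑' n, ∫⁻ z in D n, ‖deriv f z‖ₑ ^ 2 * φ (f z) := by
        rw [← lintegral_iUnion hDm hDd, hDΩ]
    _ = ∑' n, ∫⁻ w, (f '' D n).indicator φ w := by
        congr with n
        rw [lintegral_indicator (himage n), lintegral_image_eq_lintegral_enorm_deriv_sq_mul (hDm n)
          (fun z hz => hdiff z (hsub n hz)) (hDinj n)]
    _ = ∫⁻ w, ∑' n, (f '' D n).indicator φ w :=
        (lintegral_tsum fun n => (hφ.indicator (himage n)).aemeasurable).symm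
    _ ≤ ∫⁻ w, p * φ w := lintegral_mono (hp.tsum_indicator_image_le hDd hsub φ)
    _ = p * ∫⁻ w, φ w := lintegral_const_mul _ hφ

theorem lintegral_enorm_deriv_sq_mul_le {f : ℂ → ℂ} {Ω : Set ℂ} {p : ℕ}
    (hΩ : IsOpen Ω) (hf : DifferentiableOn ℂ f Ω) (hp : IsMultivalentOn f Ω p)
    {φ : ℂ → ℝ≥0∞} (hφ : Measurable φ) :
    ∫⁻ z in Ω, ‖deriv f z‖ₑ ^ 2 * φ (f z) ≤ p * ∫⁻ w, φ w := by
  let Ω' : Set ℂ := Ω ∩ deriv f ⁻¹' {0}ᶜ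
  have hΩ' : IsOpen Ω' :=
    (hf.deriv hΩ).continuousOn.isOpen_inter_preimage hΩ isOpen_compl_singleton
  have hcritical : ∫⁻ z in Ω, ‖deriv f z‖ₑ ^ 2 * φ (f z) =
      ∫⁻ z in Ω', ‖deriv f z‖ₑ ^ 2 * φ (f z) := by
    rw [← lintegral_inter_add_sdiff _ Ω hΩ'.measurableSet,
      inter_eq_self_of_subset_right inter_subset_left,
      setLIntegral_eq_zero (hΩ.measurableSet.diff hΩ'.measurableSet), add_zero]
    intro z hz
    have : deriv f z = 0 := by_contra fun h => hz.2 ⟨hz.1, h⟩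
    simp [this]
  rw [hcritical]
  exact lintegral_enorm_deriv_sq_mul_le_of_deriv_ne_zero hΩ' (hf.mono inter_subset_left)
    (hp.mono inter_subset_left) (fun z hz => hz.2) hφ

/-- The density `1 / |w|` of the logarithmic metric on the closed annulus `A ≤ |w| ≤ B`, extended by
zero. -/
noncomputable def logDensity (A B : ℝ) (w : ℂ) : ℝ≥0∞ :=
  (Icc A B).indicator (fun r => ENNReal.ofReal r⁻¹) ‖w‖

lemma measurable_logDensity (A B : ℝ) : Measurable (logDensity A B) :=
  (Measurable.indicator (by fun_prop) measurableSet_Icc).comp measurable_norm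

lemma lintegral_comp_norm {g : ℝ → ℝ≥0∞} (hg : Measurable g) :
    ∫⁻ w : ℂ, g ‖w‖ = ENNReal.ofReal (2 * Real.pi) * ∫⁻ r in Ioi 0, ENNReal.ofReal r * g r := by
  have hpolar : EqOn
      (fun q : ℝ × ℝ => ENNReal.ofReal q.1 • g ‖Complex.polarCoord.symm q‖)
      (fun q => ENNReal.ofReal q.1 * g q.1 * 1) polarCoord.target := by
    intro q hq
    have hq : 0 < q.1 := hq.1
    simp only [Complex.norm_polarCoord_symm, abs_of_pos hq, smul_eq_mul, mul_one]
  rw [← Complex.lintegral_comp_polarCoord_symm,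
    setLIntegral_congr_fun polarCoord.open_target.measurableSet hpolar, polarCoord_target,
    Measure.volume_eq_prod, ← Measure.prod_restrict,
    lintegral_prod_mul (f := fun r => ENNReal.ofReal r * g r) (g := fun _ => 1)
      (by fun_prop) (by fun_prop), lintegral_one, Measure.restrict_apply_univ, Real.volume_Ioo,
    mul_comm]
  congr 2
  ring

lemma lintegral_Icc_ofReal_inv {A B : ℝ} (hA : 0 < A) (hAB : A ≤ B) :
    ∫⁻ r in Icc A B, ENNReal.ofReal r⁻¹ = ENNReal.ofReal (Real.log (B / A)) := by
  have h0 : (0 : ℝ) ∉ uIcc A B := by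
    rw [uIcc_of_le hAB]
    exact fun h => hA.not_ge h.1
  have hint : IntegrableOn (fun r : ℝ => r⁻¹) (Ioc A B) :=
    (intervalIntegrable_iff_integrableOn_Ioc_of_le hAB).1 (intervalIntegrable_inv_iff.2 (Or.inr h0))
  rw [← setLIntegral_congr Ioc_ae_eq_Icc, ← ofReal_integral_eq_lintegral_ofReal hint,
    ← intervalIntegral.integral_of_le hAB, integral_inv h0]
  filter_upwards [ae_restrict_mem measurableSet_Ioc] with r hr
  exact inv_nonneg.2 (hA.trans hr.1).le

lemma lintegral_logDensity_sq {A B : ℝ} (hA : 0 < A) (hAB : A ≤ B) :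
    ∫⁻ w, logDensity A B w ^ 2 = ENNReal.ofReal (2 * Real.pi * Real.log (B / A)) := by
  have hradial : ∀ r ∈ Ioi (0 : ℝ), ENNReal.ofReal r *
      (Icc A B).indicator (fun r => ENNReal.ofReal r⁻¹) r ^ 2 =
        (Icc A B).indicator (fun r => ENNReal.ofReal r⁻¹) r := by
    intro r (hr : 0 < r)
    by_cases h : r ∈ Icc A B
    · rw [indicator_of_mem h, ← ENNReal.ofReal_pow (by positivity),
        ← ENNReal.ofReal_mul hr.le]
      congr 1
      field_simp
    · simp [indicator_of_notMem h]
  have hm : Measurable ((Icc A B).indicator fun r : ℝ => ENNReal.ofReal r⁻¹) :=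
    Measurable.indicator (by fun_prop) measurableSet_Icc
  simp only [logDensity]
  rw [lintegral_comp_norm (hm.pow_const 2), setLIntegral_congr_fun measurableSet_Ioi hradial,
    setLIntegral_indicator measurableSet_Icc,
    inter_eq_self_of_subset_left (Icc_subset_Ioi_iff hAB |>.2 hA), lintegral_Icc_ofReal_inv hA hAB,
    ← ENNReal.ofReal_mul (by positivity)]

lemma exists_mem_Icc_eq_forall_le {v : ℝ → ℝ} {a b B : ℝ} (hab : a ≤ b)
    (hv : ContinuousOn v (Icc a b)) (ha : v a ≤ B) (hb : B ≤ v b) :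
    ∃ d ∈ Icc a b, v d = B ∧ ∀ x ∈ Icc a d, v x ≤ B := by
  have hcompact : IsCompact (Icc a b ∩ v ⁻¹' {B}) :=
    isCompact_Icc.of_isClosed_subset
      (hv.preimage_isClosed_of_isClosed isClosed_Icc isClosed_singleton) inter_subset_left
  obtain ⟨x, hx, hxB⟩ := intermediate_value_Icc hab hv ⟨ha, hb⟩
  obtain ⟨d, ⟨hd, hdB⟩, hleast⟩ := hcompact.exists_isLeast ⟨x, hx, hxB⟩
  refine ⟨d, hd, hdB, fun x hx => le_of_not_gt fun hBx => ?_⟩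
  obtain ⟨y, hy, hyB⟩ := intermediate_value_Icc hx.1
    (hv.mono (Icc_subset_Icc_right (hx.2.trans hd.2))) ⟨ha, hBx.le⟩
  have hdy : d ≤ y := hleast ⟨⟨hy.1, hy.2.trans (hx.2.trans hd.2)⟩, hyB⟩
  obtain rfl : y = x := le_antisymm hy.2 (hx.2.trans hdy)
  exact hBx.ne' hyB

lemma exists_mem_uIcc_eq_forall_le {v : ℝ → ℝ} {a b B : ℝ} (hv : ContinuousOn v (uIcc a b))
    (ha : v a ≤ B) (hb : B ≤ v b) :
    ∃ d ∈ uIcc a b, v d = B ∧ ∀ x ∈ uIcc a d, v x ≤ B := by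
  rcases le_total a b with hab | hba
  · rw [uIcc_of_le hab] at hv ⊢
    obtain ⟨d, hd, hdB, hle⟩ := exists_mem_Icc_eq_forall_le hab hv ha hb
    exact ⟨d, hd, hdB, by rwa [uIcc_of_le hd.1]⟩
  · rw [uIcc_of_ge hba] at hv ⊢
    have hneg : MapsTo (fun x : ℝ => -x) (Icc (-a) (-b)) (Icc b a) :=
      fun x hx => ⟨le_neg.1 hx.2, neg_le.1 hx.1⟩
    obtain ⟨d, hd, hdB, hle⟩ := exists_mem_Icc_eq_forall_le (v := fun x => v (-x))
      (neg_le_neg hba) (hv.comp (by fun_prop) hneg) (by simpa using ha) (by simpa using hb)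
    refine ⟨-d, hneg hd, hdB, fun x hx => ?_⟩
    rw [uIcc_of_ge (neg_le.1 hd.1)] at hx
    simpa using hle (-x) ⟨neg_le_neg hx.2, neg_le.1 hx.1⟩

lemma exists_uIcc_subset_mapsTo_Icc {v : ℝ → ℝ} {a b A B : ℝ} (hv : ContinuousOn v (uIcc a b))
    (ha : v a ≤ A) (hb : B ≤ v b) (hAB : A ≤ B) :
    ∃ c d, uIcc c d ⊆ uIcc a b ∧ v c = A ∧ v d = B ∧ MapsTo v (uIcc c d) (Icc A B) := by
  obtain ⟨d, hd, hdB, hleB⟩ := exists_mem_uIcc_eq_forall_le hv (ha.trans hAB) hb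
  have had : uIcc d a ⊆ uIcc a b := uIcc_subset_uIcc hd left_mem_uIcc
  obtain ⟨c, hc, hcA, hleA⟩ := exists_mem_uIcc_eq_forall_le (v := fun x => -v x) (hv.mono had).neg
    (neg_le_neg (hdB ▸ hAB)) (neg_le_neg ha)
  have hcd : uIcc c d ⊆ uIcc d a := uIcc_subset_uIcc hc left_mem_uIcc
  refine ⟨c, d, hcd.trans had, neg_inj.1 hcA, hdB, fun x hx => ⟨?_, ?_⟩⟩
  · exact neg_le_neg_iff.1 (hleA x (uIcc_comm c d ▸ hx))
  · exact hleB x (uIcc_comm a d ▸ hcd hx)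

lemma hasDerivAt_log_norm {E : Type*} [NormedAddCommGroup E] [InnerProductSpace ℝ E] {γ : ℝ → E}
    {γ' : E} {y : ℝ} (hγ : HasDerivAt γ γ' y) (hne : γ y ≠ 0) :
    HasDerivAt (fun y => Real.log ‖γ y‖) (inner ℝ (γ y) γ' / ‖γ y‖ ^ 2) y := by
  have hfun : (fun y => Real.log ‖γ y‖) = fun y => Real.log (‖γ y‖ ^ 2) / 2 := by
    ext x
    simp
  have hval : inner ℝ (γ y) γ' / ‖γ y‖ ^ 2 = 2 * inner ℝ (γ y) γ' / ‖γ y‖ ^ 2 / 2 := by ring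
  rw [hfun, hval]
  exact (hγ.norm_sq.log (by positivity)).div_const 2

lemma ofReal_log_div_norm_le_lintegral {E : Type*} [NormedAddCommGroup E] [InnerProductSpace ℝ E]
    {γ γ' : ℝ → E} {c d : ℝ} (hγ : ∀ y ∈ uIcc c d, HasDerivAt γ (γ' y) y)
    (hγ' : ContinuousOn γ' (uIcc c d)) (hne : ∀ y ∈ uIcc c d, γ y ≠ 0) :
    ENNReal.ofReal (Real.log (‖γ d‖ / ‖γ c‖)) ≤
      ∫⁻ y in uIcc c d, ‖γ' y‖ₑ * ENNReal.ofReal ‖γ y‖⁻¹ := by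
  have hγc : ContinuousOn γ (uIcc c d) := fun y hy => (hγ y hy).continuousAt.continuousWithinAt
  let u' : ℝ → ℝ := fun y => inner ℝ (γ y) (γ' y) / ‖γ y‖ ^ 2
  have hu' : ContinuousOn u' (uIcc c d) := (hγc.inner (𝕜 := ℝ) hγ').div (hγc.norm.pow 2)
    fun y hy => pow_ne_zero 2 (norm_ne_zero_iff.2 (hne y hy))
  have hle : ∀ y, ‖u' y‖ₑ ≤ ‖γ' y‖ₑ * ENNReal.ofReal ‖γ y‖⁻¹ := by
    intro y
    rw [← ofReal_norm, ← ofReal_norm, ← ENNReal.ofReal_mul (norm_nonneg _)]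
    refine ENNReal.ofReal_le_ofReal ?_
    calc ‖u' y‖ = ‖inner ℝ (γ y) (γ' y)‖ / ‖γ y‖ ^ 2 := by simp [u']
      _ ≤ ‖γ y‖ * ‖γ' y‖ / ‖γ y‖ ^ 2 := by gcongr; exact norm_inner_le_norm _ _
      _ = ‖γ' y‖ * ‖γ y‖⁻¹ := by
        rcases eq_or_ne ‖γ y‖ 0 with h | h
        · simp [h]
        · field_simp
  calc ENNReal.ofReal (Real.log (‖γ d‖ / ‖γ c‖))
      = ENNReal.ofReal (∫ y in c..d, u' y) := by
        rw [Real.log_div (norm_ne_zero_iff.2 (hne d right_mem_uIcc))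
          (norm_ne_zero_iff.2 (hne c left_mem_uIcc)),
          intervalIntegral.integral_eq_sub_of_hasDerivAt
            (fun y hy => hasDerivAt_log_norm (hγ y hy) (hne y hy)) hu'.intervalIntegrable]
    _ ≤ ENNReal.ofReal ‖∫ y in uIoc c d, u' y‖ := by
        rw [← intervalIntegral.norm_integral_eq_norm_integral_uIoc]
        exact ENNReal.ofReal_le_ofReal (Real.le_norm_self _)
    _ ≤ ∫⁻ y in uIoc c d, ‖u' y‖ₑ := by
        rw [ofReal_norm]
        exact enorm_integral_le_lintegral_enorm _
    _ ≤ ∫⁻ y in uIcc c d, ‖γ' y‖ₑ * ENNReal.ofReal ‖γ y‖⁻¹ :=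
        (lintegral_mono_set uIoc_subset_uIcc).trans (lintegral_mono hle)

lemma ofReal_log_div_le_lintegral_logDensity {γ γ' : ℝ → ℂ} {a b A B : ℝ}
    (hγ : ∀ y ∈ uIcc a b, HasDerivAt γ (γ' y) y) (hγ' : ContinuousOn γ' (uIcc a b))
    (hA : 0 < A) (hAB : A ≤ B) (ha : ‖γ a‖ ≤ A) (hb : B ≤ ‖γ b‖) :
    ENNReal.ofReal (Real.log (B / A)) ≤ ∫⁻ y in uIcc a b, ‖γ' y‖ₑ * logDensity A B (γ y) := by
  have hγc : ContinuousOn γ (uIcc a b) := fun y hy => (hγ y hy).continuousAt.continuousWithinAt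
  obtain ⟨c, d, hcd, hcA, hdB, hmaps⟩ := exists_uIcc_subset_mapsTo_Icc hγc.norm ha hb hAB
  have hne : ∀ y ∈ uIcc c d, γ y ≠ 0 := fun y hy => norm_pos_iff.1 (hA.trans_le (hmaps hy).1)
  calc ENNReal.ofReal (Real.log (B / A)) = ENNReal.ofReal (Real.log (‖γ d‖ / ‖γ c‖)) := by
        rw [hcA, hdB]
    _ ≤ ∫⁻ y in uIcc c d, ‖γ' y‖ₑ * ENNReal.ofReal ‖γ y‖⁻¹ :=
        ofReal_log_div_norm_le_lintegral (fun y hy => hγ y (hcd hy)) (hγ'.mono hcd) hne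
    _ = ∫⁻ y in uIcc c d, ‖γ' y‖ₑ * logDensity A B (γ y) :=
        setLIntegral_congr_fun measurableSet_uIcc fun y hy => by
          simp only [logDensity, indicator_of_mem (hmaps hy)]
    _ ≤ ∫⁻ y in uIcc a b, ‖γ' y‖ₑ * logDensity A B (γ y) := lintegral_mono_set hcd

lemma lintegral_sq_le_measure_univ_mul {α : Type*} [MeasurableSpace α] {μ : Measure α}
    {g : α → ℝ≥0∞} (hg : AEMeasurable g μ) :
    (∫⁻ x, g x ∂μ) ^ 2 ≤ μ univ * ∫⁻ x, g x ^ 2 ∂μ := by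
  have hholder := ENNReal.lintegral_mul_le_Lp_mul_Lq μ Real.HolderConjugate.two_two
    (aemeasurable_const (b := (1 : ℝ≥0∞))) hg
  simp only [Pi.mul_apply, one_mul, ENNReal.rpow_two, one_pow, lintegral_one] at hholder
  calc (∫⁻ x, g x ∂μ) ^ 2
      ≤ (μ univ ^ (1 / 2 : ℝ) * (∫⁻ x, g x ^ 2 ∂μ) ^ (1 / 2 : ℝ)) ^ 2 := by gcongr
    _ = μ univ * ∫⁻ x, g x ^ 2 ∂μ := by
      rw [mul_pow, ← ENNReal.rpow_mul_natCast, ← ENNReal.rpow_mul_natCast]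
      norm_num

section Rectangle

open Complex (I)

variable {t₀ t₁ y₀ y₁ : ℝ}

lemma ofReal_add_ofReal_mul_I_mem_reProdIm {s t : Set ℝ} {x y : ℝ} (hx : x ∈ s) (hy : y ∈ t) :
    (x + y * I : ℂ) ∈ s ×ℂ t := by
  simp [Complex.mem_reProdIm, hx, hy]

lemma setLIntegral_reProdIm {s t : Set ℝ} (hs : MeasurableSet s) (ht : MeasurableSet t)
    {ψ : ℂ → ℝ≥0∞} (hψ : AEMeasurable ψ (volume.restrict (s ×ℂ t))) :
    ∫⁻ z in s ×ℂ t, ψ z = ∫⁻ x in s, ∫⁻ y in t, ψ (x + y * I) := by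
  have hpre : Complex.measurableEquivRealProd.symm ⁻¹' (s ×ℂ t) = s ×ˢ t := by
    ext q
    simp [Complex.mem_reProdIm, Complex.measurableEquivRealProd]
  have hm : MeasurableSet (s ×ℂ t) :=
    (hs.preimage Complex.measurable_re).inter (ht.preimage Complex.measurable_im)
  have hpres := Complex.volume_preserving_equiv_real_prod.symm.restrict_preimage hm
  have hcoord (x y : ℝ) : Complex.measurableEquivRealProd.symm (x, y) = x + y * I := by
    apply Complex.ext <;> simp [Complex.measurableEquivRealProd]
  rw [← hpres.lintegral_comp_emb (MeasurableEquiv.measurableEmbedding _), hpre,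
    Measure.volume_eq_prod, ← Measure.prod_restrict, lintegral_prod]
  · simp_rw [hcoord]
  · rw [Measure.prod_restrict, ← Measure.volume_eq_prod, ← hpre]
    exact hψ.comp_quasiMeasurePreserving hpres.quasiMeasurePreserving

lemma sq_log_div_le_of_segment {γ γ' : ℝ → ℂ} {A B : ℝ}
    (hγ : ∀ y ∈ Ioo y₀ y₁, HasDerivAt γ (γ' y) y) (hγ' : ContinuousOn γ' (Ioo y₀ y₁))
    (hA : 0 < A) (hAB : A ≤ B) (hsmall : ∃ y ∈ Ioo y₀ y₁, ‖γ y‖ ≤ A)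
    (hlarge : ∃ y ∈ Ioo y₀ y₁, B ≤ ‖γ y‖) :
    ENNReal.ofReal (Real.log (B / A)) ^ 2 ≤
      ENNReal.ofReal (y₁ - y₀) * ∫⁻ y in Ioo y₀ y₁, ‖γ' y‖ₑ ^ 2 * logDensity A B (γ y) ^ 2 := by
  obtain ⟨a, ha, haA⟩ := hsmall
  obtain ⟨b, hb, hbB⟩ := hlarge
  have hsub : uIcc a b ⊆ Ioo y₀ y₁ := ordConnected_Ioo.uIcc_subset ha hb
  have hγc : ContinuousOn γ (Ioo y₀ y₁) := fun y hy => (hγ y hy).continuousAt.continuousWithinAt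
  have hm : AEMeasurable (fun y => ‖γ' y‖ₑ * logDensity A B (γ y))
      (volume.restrict (Ioo y₀ y₁)) :=
    (hγ'.aemeasurable measurableSet_Ioo).enorm.mul
      ((measurable_logDensity A B).comp_aemeasurable (hγc.aemeasurable measurableSet_Ioo))
  calc ENNReal.ofReal (Real.log (B / A)) ^ 2
      ≤ (∫⁻ y in Ioo y₀ y₁, ‖γ' y‖ₑ * logDensity A B (γ y)) ^ 2 := by
        gcongr
        exact (ofReal_log_div_le_lintegral_logDensity (fun y hy => hγ y (hsub hy))
          (hγ'.mono hsub) hA hAB haA hbB).trans (lintegral_mono_set hsub)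
    _ ≤ ENNReal.ofReal (y₁ - y₀) * ∫⁻ y in Ioo y₀ y₁, ‖γ' y‖ₑ ^ 2 * logDensity A B (γ y) ^ 2 := by
        simpa [mul_pow] using lintegral_sq_le_measure_univ_mul hm

variable {G : ℂ → ℂ} {p : ℕ} {A B : ℝ}

lemma sq_log_div_le_of_verticalSegment (hG : DifferentiableOn ℂ G (Ioo t₀ t₁ ×ℂ Ioo y₀ y₁))
    (hA : 0 < A) (hAB : A ≤ B) {t : ℝ} (ht : t ∈ Ioo t₀ t₁)
    (hsmall : ∃ y ∈ Ioo y₀ y₁, ‖G (t + y * I)‖ ≤ A)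
    (hlarge : ∃ y ∈ Ioo y₀ y₁, B ≤ ‖G (t + y * I)‖) :
    ENNReal.ofReal (Real.log (B / A)) ^ 2 ≤ ENNReal.ofReal (y₁ - y₀) *
      ∫⁻ y in Ioo y₀ y₁, ‖deriv G (t + y * I)‖ₑ ^ 2 * logDensity A B (G (t + y * I)) ^ 2 := by
  have hopen : IsOpen (Ioo t₀ t₁ ×ℂ Ioo y₀ y₁) := isOpen_Ioo.reProdIm isOpen_Ioo
  have hmem : ∀ y ∈ Ioo y₀ y₁, (t + y * I : ℂ) ∈ Ioo t₀ t₁ ×ℂ Ioo y₀ y₁ :=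
    fun y hy => ofReal_add_ofReal_mul_I_mem_reProdIm ht hy
  have hline (y : ℝ) : HasDerivAt (fun y : ℝ => (t + y * I : ℂ)) I y := by
    simpa using ((Complex.ofRealCLM.hasDerivAt (x := y)).mul_const I).const_add (t : ℂ)
  have hderiv : ∀ y ∈ Ioo y₀ y₁,
      HasDerivAt (fun y : ℝ => G (t + y * I)) (deriv G (t + y * I) * I) y := fun y hy =>
    (hG.differentiableAt (hopen.mem_nhds (hmem y hy))).hasDerivAt.comp y (hline y)
  have hcont : ContinuousOn (fun y : ℝ => deriv G (t + y * I) * I) (Ioo y₀ y₁) :=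
    ((hG.deriv hopen).continuousOn.comp (by fun_prop) hmem).mul continuousOn_const
  have hI : ‖I‖ₑ = 1 := by simp [← ofReal_norm]
  simpa only [enorm_mul, hI, mul_one] using
    sq_log_div_le_of_segment hderiv hcont hA hAB hsmall hlarge

lemma sq_log_div_mul_le_of_verticalSegments
    (hG : DifferentiableOn ℂ G (Ioo t₀ t₁ ×ℂ Ioo y₀ y₁))
    (hp : IsMultivalentOn G (Ioo t₀ t₁ ×ℂ Ioo y₀ y₁) p) (hA : 0 < A) (hAB : A ≤ B)
    (hsmall : ∀ t ∈ Ioo t₀ t₁, ∃ y ∈ Ioo y₀ y₁, ‖G (t + y * I)‖ ≤ A)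
    (hlarge : ∀ t ∈ Ioo t₀ t₁, ∃ y ∈ Ioo y₀ y₁, B ≤ ‖G (t + y * I)‖) :
    ENNReal.ofReal (Real.log (B / A)) ^ 2 * ENNReal.ofReal (t₁ - t₀) ≤
      ENNReal.ofReal (y₁ - y₀) * (p * ENNReal.ofReal (2 * Real.pi * Real.log (B / A))) := by
  have hopen : IsOpen (Ioo t₀ t₁ ×ℂ Ioo y₀ y₁) := isOpen_Ioo.reProdIm isOpen_Ioo
  have hφ : Measurable fun w => logDensity A B w ^ 2 := (measurable_logDensity A B).pow_const 2
  have hm : AEMeasurable (fun z => ‖deriv G z‖ₑ ^ 2 * logDensity A B (G z) ^ 2)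
      (volume.restrict (Ioo t₀ t₁ ×ℂ Ioo y₀ y₁)) :=
    (((hG.deriv hopen).continuousOn.aemeasurable hopen.measurableSet).enorm.pow_const 2).mul
      (hφ.comp_aemeasurable (hG.continuousOn.aemeasurable hopen.measurableSet))
  calc ENNReal.ofReal (Real.log (B / A)) ^ 2 * ENNReal.ofReal (t₁ - t₀)
      = ∫⁻ _ in Ioo t₀ t₁, ENNReal.ofReal (Real.log (B / A)) ^ 2 := by simp
    _ ≤ ∫⁻ t in Ioo t₀ t₁, ENNReal.ofReal (y₁ - y₀) * ∫⁻ y in Ioo y₀ y₁,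
          ‖deriv G (t + y * I)‖ₑ ^ 2 * logDensity A B (G (t + y * I)) ^ 2 :=
        setLIntegral_mono' measurableSet_Ioo fun t ht =>
          sq_log_div_le_of_verticalSegment hG hA hAB ht (hsmall t ht) (hlarge t ht)
    _ = ENNReal.ofReal (y₁ - y₀) *
          ∫⁻ z in Ioo t₀ t₁ ×ℂ Ioo y₀ y₁, ‖deriv G z‖ₑ ^ 2 * logDensity A B (G z) ^ 2 := by
        rw [lintegral_const_mul' _ _ ENNReal.ofReal_ne_top,
          setLIntegral_reProdIm measurableSet_Ioo measurableSet_Ioo hm]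
    _ ≤ ENNReal.ofReal (y₁ - y₀) * (p * ENNReal.ofReal (2 * Real.pi * Real.log (B / A))) := by
        rw [← lintegral_logDensity_sq hA hAB]
        gcongr
        exact lintegral_enorm_deriv_sq_mul_le hopen hG hp hφ

theorem log_div_mul_le_of_verticalSegments (hG : DifferentiableOn ℂ G (Ioo t₀ t₁ ×ℂ Ioo y₀ y₁))
    (hp : IsMultivalentOn G (Ioo t₀ t₁ ×ℂ Ioo y₀ y₁) p) (hA : 0 < A) (hB : 0 < B) (ht : t₀ < t₁)
    (hsmall : ∀ t ∈ Ioo t₀ t₁, ∃ y ∈ Ioo y₀ y₁, ‖G (t + y * I)‖ ≤ A)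
    (hlarge : ∀ t ∈ Ioo t₀ t₁, ∃ y ∈ Ioo y₀ y₁, B ≤ ‖G (t + y * I)‖) :
    Real.log (B / A) * (t₁ - t₀) ≤ 2 * Real.pi * p * (y₁ - y₀) := by
  obtain ⟨t, htmem⟩ := nonempty_Ioo.2 ht
  obtain ⟨y, hy, -⟩ := hsmall t htmem
  have htpos : 0 < t₁ - t₀ := sub_pos.2 ht
  have hypos : 0 < y₁ - y₀ := sub_pos.2 (hy.1.trans hy.2)
  rcases le_or_gt B A with hBA | hAB
  · have hlog : Real.log (B / A) ≤ 0 := Real.log_nonpos (by positivity) ((div_le_one hA).2 hBA)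
    exact (mul_nonpos_of_nonpos_of_nonneg hlog htpos.le).trans (by positivity)
  have hlog : 0 < Real.log (B / A) := Real.log_pos ((one_lt_div hA).2 hAB)
  have key := sq_log_div_mul_le_of_verticalSegments hG hp hA hAB.le hsmall hlarge
  rw [← ENNReal.ofReal_pow hlog.le, ← ENNReal.ofReal_mul (by positivity), ← ENNReal.ofReal_natCast,
    ← ENNReal.ofReal_mul (by positivity), ← ENNReal.ofReal_mul hypos.le,
    ENNReal.ofReal_le_ofReal_iff (by positivity)] at key
  refine le_of_mul_le_mul_left ?_ hlog
  linarith

theorem log_div_mul_le_of_horizontalSegments (hG : DifferentiableOn ℂ G (Ioo t₀ t₁ ×ℂ Ioo y₀ y₁))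
    (hp : IsMultivalentOn G (Ioo t₀ t₁ ×ℂ Ioo y₀ y₁) p) (hA : 0 < A) (hB : 0 < B) (hy : y₀ < y₁)
    (hsmall : ∀ y ∈ Ioo y₀ y₁, ∃ t ∈ Ioo t₀ t₁, ‖G (t + y * I)‖ ≤ A)
    (hlarge : ∀ y ∈ Ioo y₀ y₁, ∃ t ∈ Ioo t₀ t₁, B ≤ ‖G (t + y * I)‖) :
    Real.log (B / A) * (y₁ - y₀) ≤ 2 * Real.pi * p * (t₁ - t₀) := by
  have hmaps : MapsTo (fun w : ℂ => -I * w) (Ioo (-y₁) (-y₀) ×ℂ Ioo t₀ t₁)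
      (Ioo t₀ t₁ ×ℂ Ioo y₀ y₁) := by
    intro w ⟨hre, him⟩
    exact ⟨by simpa using him, by simpa [lt_neg, neg_lt] using hre.symm⟩
  have hinj : InjOn (fun w : ℂ => -I * w) (Ioo (-y₁) (-y₀) ×ℂ Ioo t₀ t₁) :=
    (mul_right_injective₀ (neg_ne_zero.2 Complex.I_ne_zero)).injOn
  have hrot (t y : ℝ) : -I * (t + y * I) = y + (-t : ℝ) * I := by
    push_cast
    linear_combination -(y : ℂ) * Complex.I_mul_I
  have hneg : ∀ t ∈ Ioo (-y₁) (-y₀), -t ∈ Ioo y₀ y₁ := fun t ht => ⟨lt_neg.1 ht.2, neg_lt.1 ht.1⟩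
  have key := log_div_mul_le_of_verticalSegments (hG.comp (by fun_prop) hmaps)
    (hp.comp_injOn hmaps hinj) hA hB (neg_lt_neg hy)
    (fun t ht => by simpa only [hrot, Function.comp_apply] using hsmall _ (hneg t ht))
    (fun t ht => by simpa only [hrot, Function.comp_apply] using hlarge _ (hneg t ht))
  linarith

lemma exists_verticalSegment_lt_norm_or_norm_lt
    (hG : DifferentiableOn ℂ G (Ioo t₀ t₁ ×ℂ Ioo y₀ y₁))
    (hp : IsMultivalentOn G (Ioo t₀ t₁ ×ℂ Ioo y₀ y₁) p) (ht : t₀ < t₁) (hA : 0 < A) {K : ℝ}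
    (hK : 2 * Real.pi * p * (y₁ - y₀) < K * (t₁ - t₀)) :
    ∃ t ∈ Ioo t₀ t₁, (∀ y ∈ Ioo y₀ y₁, A < ‖G (t + y * I)‖) ∨
      ∀ y ∈ Ioo y₀ y₁, ‖G (t + y * I)‖ < A * Real.exp K := by
  by_contra! hcross
  have key := log_div_mul_le_of_verticalSegments hG hp hA (by positivity : 0 < A * Real.exp K) ht
    (fun t ht => (hcross t ht).1) (fun t ht => (hcross t ht).2)
  rw [mul_div_cancel_left₀ _ hA.ne', Real.log_exp] at key
  exact key.not_gt hK

end Rectangle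

lemma exists_arg_of_mem_sphere {c z : ℂ} {t : ℝ} (hz : z ∈ Metric.sphere c (Real.exp t)) :
    ∃ y ∈ Icc (-Real.pi) Real.pi, c + Complex.exp (t + y * Complex.I) = z := by
  refine ⟨(z - c).arg, ⟨(Complex.neg_pi_lt_arg _).le, Complex.arg_le_pi _⟩, ?_⟩
  rw [Complex.exp_add, ← Complex.ofReal_exp, ← mem_sphere_iff_norm.1 hz,
    Complex.norm_mul_exp_arg_mul_I, add_sub_cancel]

lemma mapsTo_add_exp_ball {c : ℂ} {ρ₀ ρ₁ : ℝ} (hρ : 0 < ρ₁) :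
    MapsTo (fun w => c + Complex.exp w)
      (Ioo (Real.log ρ₀) (Real.log ρ₁) ×ℂ Ioo (-Real.pi) Real.pi) (Metric.ball c ρ₁) := by
  intro w hw
  rw [Metric.mem_ball, dist_self_add_left, Complex.norm_exp]
  exact (Real.lt_log_iff_exp_lt hρ).1 hw.1.2

lemma injOn_add_exp (c : ℂ) (s : Set ℝ) :
    InjOn (fun w => c + Complex.exp w) (s ×ℂ Ioo (-Real.pi) Real.pi) :=
  fun _ hz _ hw h => Complex.exp_inj_of_neg_pi_lt_of_le_pi hz.2.1 hz.2.2.le hw.2.1 hw.2.2.le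
    (add_left_cancel h)

theorem exists_sphere_le_norm_or_norm_le {f : ℂ → ℂ} {p : ℕ} {c : ℂ} {ρ₀ ρ₁ A K : ℝ}
    (hf : DifferentiableOn ℂ f (Metric.ball c ρ₁)) (hp : IsMultivalentOn f (Metric.ball c ρ₁) p)
    (hρ₀ : 0 < ρ₀) (hρ : ρ₀ < ρ₁) (hA : 0 < A)
    (hK : 4 * Real.pi ^ 2 * p < K * Real.log (ρ₁ / ρ₀)) :
    ∃ ρ ∈ Ioo ρ₀ ρ₁, (∀ z ∈ Metric.sphere c ρ, A ≤ ‖f z‖) ∨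
      ∀ z ∈ Metric.sphere c ρ, ‖f z‖ ≤ A * Real.exp K := by
  have hρ₁ : 0 < ρ₁ := hρ₀.trans hρ
  have hmaps := mapsTo_add_exp_ball (c := c) (ρ₀ := ρ₀) hρ₁
  rw [Real.log_div hρ₁.ne' hρ₀.ne'] at hK
  obtain ⟨t, ht, hdich⟩ := exists_verticalSegment_lt_norm_or_norm_lt (hf.comp (by fun_prop) hmaps)
    (hp.comp_injOn hmaps (injOn_add_exp c _)) (Real.log_lt_log hρ₀ hρ) hA (K := K) (by linarith)
  have hρt : Real.exp t ∈ Ioo ρ₀ ρ₁ :=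
    ⟨(Real.log_lt_iff_lt_exp hρ₀).1 ht.1, (Real.lt_log_iff_exp_lt hρ₁).1 ht.2⟩
  have hcont : Continuous fun y : ℝ => ‖f (c + Complex.exp (t + y * Complex.I))‖ := by
    refine (hf.continuousOn.comp_continuous (by fun_prop) fun y => ?_).norm
    simpa [Complex.norm_exp] using hρt.2
  have hclosure : Icc (-Real.pi) Real.pi = closure (Ioo (-Real.pi) Real.pi) :=
    (closure_Ioo (by linarith [Real.pi_pos])).symm
  refine ⟨Real.exp t, hρt, hdich.imp (fun hlt z hz => ?_) (fun hlt z hz => ?_)⟩ <;>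
    obtain ⟨y, hy, rfl⟩ := exists_arg_of_mem_sphere hz <;> rw [hclosure] at hy
  · exact le_on_closure (fun y hy => (hlt y hy).le) continuousOn_const hcont.continuousOn hy
  · exact le_on_closure (fun y hy => (hlt y hy).le) hcont.continuousOn continuousOn_const hy

lemma norm_le_of_forall_mem_sphere_norm_le {f : ℂ → ℂ} {c z : ℂ} {ρ C : ℝ}
    (hf : DifferentiableOn ℂ f (Metric.closedBall c ρ)) (hρ : ρ ≠ 0)
    (hC : ∀ z ∈ Metric.sphere c ρ, ‖f z‖ ≤ C) (hz : z ∈ Metric.closedBall c ρ) : ‖f z‖ ≤ C := by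
  refine Complex.norm_le_of_forall_mem_frontier_norm_le (U := Metric.ball c ρ)
    Metric.isBounded_ball (DifferentiableOn.diffContOnCl ?_) ?_ ?_
  · rwa [closure_ball c hρ]
  · rwa [frontier_ball c hρ]
  · rwa [closure_ball c hρ]

section Circles

variable {f : ℂ → ℂ} {p : ℕ} {c : ℂ} {ρ₀ ρ₁ K : ℝ}

lemma pos_of_lt_mul_log_div (hρ₀ : 0 < ρ₀) (hρ : ρ₀ < ρ₁)
    (hK : 4 * Real.pi ^ 2 * p < K * Real.log (ρ₁ / ρ₀)) : 0 < K := by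
  have hlog : 0 < Real.log (ρ₁ / ρ₀) := Real.log_pos ((one_lt_div hρ₀).2 hρ)
  have hnonneg : 0 ≤ 4 * Real.pi ^ 2 * p := by positivity
  exact pos_of_mul_pos_left (hnonneg.trans_lt hK) hlog.le

lemma norm_le_of_forall_sphere_exists_norm_le {A : ℝ}
    (hf : DifferentiableOn ℂ f (Metric.ball c ρ₁)) (hp : IsMultivalentOn f (Metric.ball c ρ₁) p)
    (hρ₀ : 0 < ρ₀) (hρ : ρ₀ < ρ₁) (hA : 0 < A)
    (hK : 4 * Real.pi ^ 2 * p < K * Real.log (ρ₁ / ρ₀))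
    (hsmall : ∀ ρ ∈ Ioo ρ₀ ρ₁, ∃ z ∈ Metric.sphere c ρ, ‖f z‖ ≤ A) {z : ℂ}
    (hz : z ∈ Metric.closedBall c ρ₀) : ‖f z‖ ≤ A * Real.exp (2 * K) := by
  obtain ⟨ρ, hρmem, hlarge | hle⟩ := exists_sphere_le_norm_or_norm_le hf hp hρ₀ hρ
    (by positivity : 0 < A * Real.exp K) hK
  · obtain ⟨w, hw, hwA⟩ := hsmall ρ hρmem
    have hexp : 1 < Real.exp K := Real.one_lt_exp_iff.2 (pos_of_lt_mul_log_div hρ₀ hρ hK)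
    exact absurd ((hlarge w hw).trans hwA) (lt_mul_of_one_lt_right hA hexp).not_ge
  · rw [two_mul, Real.exp_add, ← mul_assoc]
    exact norm_le_of_forall_mem_sphere_norm_le
      (hf.mono (Metric.closedBall_subset_ball hρmem.2)) (hρ₀.trans hρmem.1).ne' hle
      (Metric.closedBall_subset_closedBall hρmem.1.le hz)

lemma exists_sphere_norm_center_mul_exp_le
    (hf : DifferentiableOn ℂ f (Metric.ball c ρ₁)) (hp : IsMultivalentOn f (Metric.ball c ρ₁) p)
    (hρ₀ : 0 < ρ₀) (hρ : ρ₀ < ρ₁) (hc : f c ≠ 0)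
    (hK : 4 * Real.pi ^ 2 * p < K * Real.log (ρ₁ / ρ₀)) :
    ∃ ρ ∈ Ioo ρ₀ ρ₁, ∀ z ∈ Metric.sphere c ρ, ‖f c‖ * Real.exp (-(2 * K)) ≤ ‖f z‖ := by
  obtain ⟨ρ, hρmem, hlarge | hle⟩ := exists_sphere_le_norm_or_norm_le hf hp hρ₀ hρ
    (by positivity : 0 < ‖f c‖ * Real.exp (-(2 * K))) hK
  · exact ⟨ρ, hρmem, hlarge⟩
  · have hρpos : 0 < ρ := hρ₀.trans hρmem.1
    have hcenter : ‖f c‖ ≤ ‖f c‖ * Real.exp (-(2 * K)) * Real.exp K :=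
      norm_le_of_forall_mem_sphere_norm_le (hf.mono (Metric.closedBall_subset_ball hρmem.2))
        hρpos.ne' hle (Metric.mem_closedBall_self hρpos.le)
    have hexp : Real.exp (-(2 * K) + K) < 1 :=
      Real.exp_lt_one_iff.2 (by linarith [pos_of_lt_mul_log_div hρ₀ hρ hK])
    rw [mul_assoc, ← Real.exp_add] at hcenter
    exact absurd hcenter (mul_lt_of_lt_one_right (norm_pos_iff.2 hc) hexp).not_ge

end Circles

section Strip

open Complex (I)

/-- The strip `|Im w| < π / 2`, a conformal model of the disk in which a radius becomes the positive
real axis. -/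
def strip : Set ℂ := univ ×ℂ Ioo (-(Real.pi / 2)) (Real.pi / 2)

lemma reProdIm_subset_strip (s : Set ℝ) : s ×ℂ Ioo (-(Real.pi / 2)) (Real.pi / 2) ⊆ strip :=
  fun _ hw => ⟨mem_univ _, hw.2⟩

lemma ball_ofReal_one_subset_strip (T : ℝ) : Metric.ball (T : ℂ) 1 ⊆ strip := by
  intro w hw
  have him : |w.im| < 1 := by
    simpa using (Complex.abs_im_le_norm (w - T)).trans_lt (mem_ball_iff_norm.1 hw)
  obtain ⟨hlower, hupper⟩ := abs_lt.1 him
  exact ⟨mem_univ _, by linarith [Real.pi_gt_three], by linarith [Real.pi_gt_three]⟩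

lemma exists_mem_sphere_of_verticalSegment {T t ρ : ℝ} (ht : t ∈ Ioo T (T + 1 / 2))
    (hρ : ρ ∈ Ioo (1 / 2) 1) :
    ∃ y ∈ Ioo (-(Real.pi / 2)) (Real.pi / 2), (t + y * I : ℂ) ∈ Metric.sphere (T : ℂ) ρ := by
  obtain ⟨hTt, htT⟩ := ht
  obtain ⟨hρ₀, hρ₁⟩ := hρ
  have hsq : 0 ≤ ρ ^ 2 - (t - T) ^ 2 := by nlinarith
  have hsqrt : √(ρ ^ 2 - (t - T) ^ 2) ≤ 1 := Real.sqrt_le_one.2 (by nlinarith)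
  have hnonneg := Real.sqrt_nonneg (ρ ^ 2 - (t - T) ^ 2)
  refine ⟨√(ρ ^ 2 - (t - T) ^ 2), ⟨by linarith [Real.pi_gt_three], by linarith [Real.pi_gt_three]⟩,
    ?_⟩
  rw [mem_sphere_iff_norm, show (t + √(ρ ^ 2 - (t - T) ^ 2) * I - T : ℂ) =
    (t - T : ℝ) + √(ρ ^ 2 - (t - T) ^ 2) * I by push_cast; ring, Complex.norm_add_mul_I,
    Real.sq_sqrt hsq, add_sub_cancel, Real.sqrt_sq (by linarith)]

variable {g : ℂ → ℂ} {p : ℕ}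

lemma pi_sq_lt_ten : Real.pi ^ 2 < 10 := by
  nlinarith [Real.pi_lt_d2, Real.pi_pos]

lemma two_mul_pi_mul_natCast_mul_pi_lt (hp : 0 < p) :
    2 * Real.pi * p * (Real.pi / 2 - -(Real.pi / 2)) < 100 * p * (1 / 2) := by
  calc 2 * Real.pi * p * (Real.pi / 2 - -(Real.pi / 2)) = 2 * p * Real.pi ^ 2 := by ring
    _ < 2 * p * 10 := by gcongr; exact pi_sq_lt_ten
    _ ≤ 100 * p * (1 / 2) := by linarith [(p.cast_nonneg : (0 : ℝ) ≤ p)]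

lemma four_mul_pi_sq_mul_natCast_lt (hp : 0 < p) :
    4 * Real.pi ^ 2 * p < 100 * p * Real.log 2 := by
  calc 4 * Real.pi ^ 2 * p < 4 * 10 * p := by gcongr; exact pi_sq_lt_ten
    _ ≤ 100 * p * 0.69 := by linarith [(p.cast_nonneg : (0 : ℝ) ≤ p)]
    _ ≤ 100 * p * Real.log 2 := by gcongr; linarith [Real.log_two_gt_d9]

lemma exists_verticalSegment_norm_le (hg : DifferentiableOn ℂ g strip)
    (hp : IsMultivalentOn g strip p) (hp₀ : 0 < p) {A : ℝ} (hA : 0 < A)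
    (hsmall : ∀ t ∈ Ioo (0 : ℝ) (1 / 2), ‖g t‖ ≤ A) :
    ∃ t ∈ Ioo (0 : ℝ) (1 / 2), ∀ y ∈ Ioo (-(Real.pi / 2)) (Real.pi / 2),
      ‖g (t + y * I)‖ ≤ A * Real.exp (100 * p) := by
  obtain ⟨t, ht, hlarge | hlt⟩ := exists_verticalSegment_lt_norm_or_norm_lt
    (hg.mono (reProdIm_subset_strip (Ioo 0 (1 / 2)))) (hp.mono (reProdIm_subset_strip _))
    (by norm_num) hA (by simpa using two_mul_pi_mul_natCast_mul_pi_lt hp₀)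
  · have hzero : (0 : ℝ) ∈ Ioo (-(Real.pi / 2)) (Real.pi / 2) := by simp [Real.pi_pos]
    exact absurd (hsmall t ht) (by simpa using hlarge 0 hzero)
  · exact ⟨t, ht, fun y hy => (hlt y hy).le⟩

-- Every vertical segment near `T` meets the circle around `T` on which `‖g‖` is bounded below.
lemma exists_verticalSegment_le_norm (hg : DifferentiableOn ℂ g strip)
    (hp : IsMultivalentOn g strip p) (hp₀ : 0 < p) {T : ℝ} (hT : g T ≠ 0) :
    ∃ t ∈ Ioo T (T + 1 / 2), ∀ y ∈ Ioo (-(Real.pi / 2)) (Real.pi / 2),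
      ‖g T‖ * Real.exp (-(300 * p)) ≤ ‖g (t + y * I)‖ := by
  have hball := ball_ofReal_one_subset_strip T
  obtain ⟨ρ, hρ, hsphere⟩ := exists_sphere_norm_center_mul_exp_le (hg.mono hball) (hp.mono hball)
    (by norm_num : (0 : ℝ) < 1 / 2) (by norm_num) hT
    (by simpa using four_mul_pi_sq_mul_natCast_lt hp₀)
  obtain ⟨t, ht, hlarge | hlt⟩ := exists_verticalSegment_lt_norm_or_norm_lt
    (hg.mono (reProdIm_subset_strip (Ioo T (T + 1 / 2)))) (hp.mono (reProdIm_subset_strip _))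
    (by linarith) (by positivity : 0 < ‖g T‖ * Real.exp (-(300 * p)))
    (by simpa using two_mul_pi_mul_natCast_mul_pi_lt hp₀)
  · exact ⟨t, ht, fun y hy => (hlarge y hy).le⟩
  · obtain ⟨y, hy, hyρ⟩ := exists_mem_sphere_of_verticalSegment ht hρ
    have hcross := (hsphere _ hyρ).trans_lt (hlt y hy)
    rw [mul_assoc, ← Real.exp_add, show -(300 * p) + 100 * p = -(2 * (100 * p : ℝ)) by ring]
      at hcross
    exact absurd hcross (lt_irrefl _)

/- Horizontal lines run from a vertical segment where `g` is small to one beyond `T` where `g` is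
comparable to `g T`; they have length at most `T + 1` and sweep out height `π`. -/
theorem norm_le_exp_of_isMultivalentOn_strip (hg : DifferentiableOn ℂ g strip)
    (hp : IsMultivalentOn g strip p) {A : ℝ} (hA : 0 < A)
    (hsmall : ∀ t ∈ Ioo (0 : ℝ) (1 / 2), ‖g t‖ ≤ A) {T : ℝ} (hT : 0 ≤ T) :
    ‖g T‖ ≤ A * Real.exp (402 * p + 2 * p * T) := by
  rcases eq_or_ne (g T) 0 with hzero | hne
  · rw [hzero, norm_zero]
    positivity
  have hp₀ := hp.pos_of_nonempty ⟨T, ball_ofReal_one_subset_strip T (Metric.mem_ball_self one_pos)⟩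
  have hgT : 0 < ‖g T‖ := norm_pos_iff.2 hne
  obtain ⟨tₗ, htₗ, hleft⟩ := exists_verticalSegment_norm_le hg hp hp₀ hA hsmall
  obtain ⟨tᵣ, htᵣ, hright⟩ := exists_verticalSegment_le_norm hg hp hp₀ hne
  have key := log_div_mul_le_of_horizontalSegments
    (hg.mono (reProdIm_subset_strip (Ioo 0 (T + 1)))) (hp.mono (reProdIm_subset_strip _))
    (by positivity : 0 < A * Real.exp (100 * p))
    (by positivity : 0 < ‖g T‖ * Real.exp (-(300 * p))) (by linarith [Real.pi_pos])
    (fun y hy => ⟨tₗ, ⟨htₗ.1, by linarith [htₗ.2]⟩, hleft y hy⟩)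
    (fun y hy => ⟨tᵣ, ⟨by linarith [htᵣ.1], by linarith [htᵣ.2]⟩, hright y hy⟩)
  have hlog : Real.log (‖g T‖ * Real.exp (-(300 * p)) / (A * Real.exp (100 * p))) ≤
      2 * p * (T + 1) := le_of_mul_le_mul_right (by linarith) Real.pi_pos
  rw [Real.log_div (by positivity) (by positivity), Real.log_mul hgT.ne' (Real.exp_ne_zero _),
    Real.log_mul hA.ne' (Real.exp_ne_zero _), Real.log_exp, Real.log_exp] at hlog
  rw [← Real.log_le_log_iff hgT (by positivity), Real.log_mul hA.ne' (Real.exp_ne_zero _),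
    Real.log_exp]
  linarith

end Strip

section Growth

/-- The conformal map of `strip` onto the unit disk that takes the positive real axis to the
radius in the direction of the unit vector `u`. -/
noncomputable def stripToDisk (u w : ℂ) : ℂ := u * ((Complex.exp w - 1) / (Complex.exp w + 1))

lemma exp_re_pos_of_mem_strip {w : ℂ} (hw : w ∈ strip) : 0 < (Complex.exp w).re := by
  rw [Complex.exp_re]
  exact mul_pos (Real.exp_pos _) (Real.cos_pos_of_mem_Ioo hw.2)

lemma exp_add_one_ne_zero_of_mem_strip {w : ℂ} (hw : w ∈ strip) : Complex.exp w + 1 ≠ 0 := by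
  intro hzero
  have hre := congrArg Complex.re hzero
  rw [Complex.add_re, Complex.one_re, Complex.zero_re] at hre
  linarith [exp_re_pos_of_mem_strip hw]

lemma differentiableOn_stripToDisk (u : ℂ) : DifferentiableOn ℂ (stripToDisk u) strip := by
  unfold stripToDisk
  exact DifferentiableOn.const_mul (DifferentiableOn.div (by fun_prop) (by fun_prop)
    fun w hw => exp_add_one_ne_zero_of_mem_strip hw) u

lemma mapsTo_stripToDisk {u : ℂ} (hu : ‖u‖ = 1) :
    MapsTo (stripToDisk u) strip (Metric.ball 0 1) := by
  intro w hw
  have hpos := exp_re_pos_of_mem_strip hw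
  rw [mem_ball_zero_iff, stripToDisk, norm_mul, hu, one_mul, norm_div,
    div_lt_one (norm_pos_iff.2 (exp_add_one_ne_zero_of_mem_strip hw)),
    ← sq_lt_sq₀ (norm_nonneg _) (norm_nonneg _), Complex.sq_norm, Complex.sq_norm,
    Complex.normSq_apply, Complex.normSq_apply]
  simp only [Complex.add_re, Complex.sub_re, Complex.add_im, Complex.sub_im, Complex.one_re,
    Complex.one_im]
  linarith

lemma injOn_stripToDisk {u : ℂ} (hu : u ≠ 0) : InjOn (stripToDisk u) strip := by
  intro v hv w hw hvw
  have hdiv := mul_left_cancel₀ hu hvw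
  rw [div_eq_div_iff (exp_add_one_ne_zero_of_mem_strip hv)
    (exp_add_one_ne_zero_of_mem_strip hw)] at hdiv
  have hexp : Complex.exp v = Complex.exp w := by linear_combination hdiv / 2
  have hpi := Real.pi_pos
  exact Complex.exp_inj_of_neg_pi_lt_of_le_pi (by linarith [hv.2.1]) (by linarith [hv.2.2])
    (by linarith [hw.2.1]) (by linarith [hw.2.2]) hexp

lemma stripToDisk_ofReal (u : ℂ) (t : ℝ) :
    stripToDisk u t = u * ((Real.exp t - 1) / (Real.exp t + 1) : ℝ) := by
  rw [stripToDisk]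
  push_cast
  rfl

lemma stripToDisk_ofReal_mem_closedBall {u : ℂ} (hu : ‖u‖ = 1) {t : ℝ}
    (ht : t ∈ Ioo (0 : ℝ) (1 / 2)) : stripToDisk u t ∈ Metric.closedBall 0 (1 / 4) := by
  have hone : 1 ≤ Real.exp t := Real.one_le_exp ht.1.le
  have hmono : Real.exp t ≤ Real.exp (1 / 2) := Real.exp_le_exp.2 ht.2.le
  have hsq : Real.exp (1 / 2) ^ 2 = Real.exp 1 := by rw [← Real.exp_nat_mul]; norm_num
  have hexp : Real.exp t ≤ 5 / 3 := by
    nlinarith [Real.exp_one_lt_d9, Real.exp_pos (1 / 2)]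
  rw [mem_closedBall_zero_iff, stripToDisk_ofReal, norm_mul, hu, one_mul, Complex.norm_real,
    Real.norm_of_nonneg (div_nonneg (by linarith) (by linarith)), div_le_iff₀ (by linarith)]
  linarith

lemma exists_stripToDisk_eq {z : ℂ} (hz : z ∈ Metric.ball 0 1) :
    ∃ u T, ‖u‖ = 1 ∧ 0 ≤ T ∧ Real.exp T = (1 + ‖z‖) / (1 - ‖z‖) ∧ stripToDisk u (T : ℝ) = z := by
  have hlt : 0 < 1 - ‖z‖ := sub_pos.2 (mem_ball_zero_iff.1 hz)
  have hexp : Real.exp (Real.log ((1 + ‖z‖) / (1 - ‖z‖))) = (1 + ‖z‖) / (1 - ‖z‖) :=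
    Real.exp_log (by positivity)
  refine ⟨Complex.exp (z.arg * Complex.I), Real.log ((1 + ‖z‖) / (1 - ‖z‖)),
    Complex.norm_exp_ofReal_mul_I _,
    Real.log_nonneg ((one_le_div hlt).2 (by linarith [norm_nonneg z])), hexp, ?_⟩
  have hradius : ((1 + ‖z‖) / (1 - ‖z‖) - 1) / ((1 + ‖z‖) / (1 - ‖z‖) + 1) = ‖z‖ := by
    field_simp
    ring
  rw [stripToDisk_ofReal, hexp, hradius, mul_comm, Complex.norm_mul_exp_arg_mul_I]

variable {f : ℂ → ℂ} {p : ℕ} {M : ℝ}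

lemma norm_le_of_isMultivalentOn_unitBall_of_pos (hf : DifferentiableOn ℂ f (Metric.ball 0 1))
    (hp : IsMultivalentOn f (Metric.ball 0 1) p) (hM : 0 < M)
    (hsmall : ∀ ρ ∈ Ioo (1 / 4 : ℝ) (1 / 2), ∃ z ∈ Metric.sphere 0 ρ, ‖f z‖ ≤ M) {z : ℂ}
    (hz : z ∈ Metric.ball 0 1) :
    ‖f z‖ ≤ M * Real.exp (602 * p) * ((1 + ‖z‖) / (1 - ‖z‖)) ^ (2 * p) := by
  have hsub : Metric.ball (0 : ℂ) (1 / 2) ⊆ Metric.ball 0 1 :=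
    Metric.ball_subset_ball (by norm_num)
  have hlog : 4 * Real.pi ^ 2 * p < 100 * p * Real.log (1 / 2 / (1 / 4)) := by
    rw [show (1 / 2 / (1 / 4) : ℝ) = 2 by norm_num]
    exact four_mul_pi_sq_mul_natCast_lt (hp.pos_of_nonempty ⟨z, hz⟩)
  obtain ⟨u, T, hu, hT, hexpT, rfl⟩ := exists_stripToDisk_eq hz
  have hu₀ : u ≠ 0 := norm_ne_zero_iff.1 (hu ▸ one_ne_zero)
  have hstrip := norm_le_exp_of_isMultivalentOn_strip
    (hf.comp (differentiableOn_stripToDisk u) (mapsTo_stripToDisk hu))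
    (hp.comp_injOn (mapsTo_stripToDisk hu) (injOn_stripToDisk hu₀))
    (by positivity : 0 < M * Real.exp (2 * (100 * p)))
    (fun t ht => norm_le_of_forall_sphere_exists_norm_le (hf.mono hsub) (hp.mono hsub)
      (by norm_num) (by norm_num) hM hlog hsmall (stripToDisk_ofReal_mem_closedBall hu ht)) hT
  calc ‖f (stripToDisk u T)‖
      ≤ M * Real.exp (2 * (100 * p)) * Real.exp (402 * p + 2 * p * T) := hstrip
    _ = M * Real.exp (602 * p) * Real.exp T ^ (2 * p) := by
        simp only [mul_assoc, ← Real.exp_nat_mul, ← Real.exp_add]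
        push_cast
        ring_nf
    _ = _ := by rw [hexpT]

lemma norm_le_of_isMultivalentOn_unitBall (hf : DifferentiableOn ℂ f (Metric.ball 0 1))
    (hp : IsMultivalentOn f (Metric.ball 0 1) p)
    (hsmall : ∀ ρ ∈ Ioo (1 / 4 : ℝ) (1 / 2), ∃ z ∈ Metric.sphere 0 ρ, ‖f z‖ ≤ M) {z : ℂ}
    (hz : z ∈ Metric.ball 0 1) :
    ‖f z‖ ≤ M * Real.exp (602 * p) * ((1 + ‖z‖) / (1 - ‖z‖)) ^ (2 * p) := by
  have hM : 0 ≤ M := by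
    obtain ⟨w, -, hw⟩ := hsmall (3 / 8) (by norm_num)
    exact (norm_nonneg _).trans hw
  have hlim : Tendsto (fun M' : ℝ => M' * Real.exp (602 * p) * ((1 + ‖z‖) / (1 - ‖z‖)) ^ (2 * p))
      (𝓝[>] M) (𝓝 (M * Real.exp (602 * p) * ((1 + ‖z‖) / (1 - ‖z‖)) ^ (2 * p))) :=
    (Continuous.tendsto (by fun_prop) M).mono_left nhdsWithin_le_nhds
  refine ge_of_tendsto hlim ?_
  filter_upwards [self_mem_nhdsWithin] with M' hM'
  refine norm_le_of_isMultivalentOn_unitBall_of_pos hf hp (hM.trans_lt hM') (fun ρ hρ => ?_) hz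
  obtain ⟨w, hw, hwM⟩ := hsmall ρ hρ
  exact ⟨w, hw, hwM.trans (le_of_lt hM')⟩

theorem norm_le_of_isMultivalentOn_ball {R : ℝ} (hf : DifferentiableOn ℂ f (Metric.ball 0 R))
    (hp : IsMultivalentOn f (Metric.ball 0 R) p)
    (hsmall : ∀ ρ ∈ Ioo (R / 4) (R / 2), ∃ z ∈ Metric.sphere 0 ρ, ‖f z‖ ≤ M) {z : ℂ}
    (hz : z ∈ Metric.ball 0 R) :
    ‖f z‖ ≤ M * Real.exp (602 * p) * ((R + ‖z‖) / (R - ‖z‖)) ^ (2 * p) := by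
  have hzR : ‖z‖ < R := mem_ball_zero_iff.1 hz
  have hR : 0 < R := (norm_nonneg z).trans_lt hzR
  have hR₀ : (R : ℂ) ≠ 0 := Complex.ofReal_ne_zero.2 hR.ne'
  have hmaps : MapsTo (fun w : ℂ => R * w) (Metric.ball 0 1) (Metric.ball 0 R) := by
    intro w hw
    rw [mem_ball_zero_iff] at hw ⊢
    rw [norm_mul, Complex.norm_of_nonneg hR.le]
    exact mul_lt_of_lt_one_right hR hw
  have hnorm : ‖z / R‖ = ‖z‖ / R := by rw [norm_div, Complex.norm_of_nonneg hR.le]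
  have hball := norm_le_of_isMultivalentOn_unitBall (M := M) (z := z / R)
    (hf.comp (by fun_prop) hmaps) (hp.comp_injOn hmaps (mul_right_injective₀ hR₀).injOn)
    (fun ρ hρ => ?_) (by rw [mem_ball_zero_iff, hnorm]; exact (div_lt_one hR).2 hzR)
  · have hratio : (1 + ‖z‖ / R) / (1 - ‖z‖ / R) = (R + ‖z‖) / (R - ‖z‖) := by
      rw [one_add_div hR.ne', one_sub_div hR.ne', div_div_div_cancel_right₀ hR.ne']
    rwa [hnorm, hratio, Function.comp_apply, mul_div_cancel₀ _ hR₀] at hball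
  · obtain ⟨w, hw, hwM⟩ := hsmall (R * ρ) ⟨by nlinarith [hρ.1], by nlinarith [hρ.2]⟩
    refine ⟨w / R, ?_, by rwa [Function.comp_apply, mul_div_cancel₀ _ hR₀]⟩
    rw [mem_sphere_zero_iff_norm] at hw ⊢
    rw [norm_div, hw, Complex.norm_of_nonneg hR.le, mul_div_cancel_left₀ _ hR.ne']

end Growth

section ZeroCounting

lemma ordAt_eq_analyticOrderAt (g : ℂ → ℂ) (z : ℂ) : ordAt g z = analyticOrderAt g z := by
  unfold ordAt
  split_ifs with hg
  · rfl
  · exact (analyticOrderAt_of_not_analyticAt hg).symm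

lemma summable_enat {ι : Type*} (v : ι → ℕ∞) : Summable v :=
  ⟨_, tendsto_atTop_iSup fun _ _ hst => Finset.sum_le_sum_of_subset hst⟩

variable {F : ℂ → ℂ} {U : Set ℂ}

lemma ordAt_eq_add_of_eqOn_pow_mul {g : ℂ → ℂ} {n : ℕ} {x z : ℂ} (hU : IsOpen U)
    (hg : DifferentiableOn ℂ g U) (hF : EqOn F (fun z => (z - x) ^ n * g z) U) (hz : z ∈ U) :
    ordAt F z = (if z = x then (n : ℕ∞) else 0) + ordAt g z := by
  have hsub : AnalyticAt ℂ (fun z => z - x) z := by fun_prop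
  have hpow : analyticOrderAt (fun z => z - x) z = if z = x then 1 else 0 := by
    split_ifs with hzx
    · subst hzx
      exact analyticOrderAt_id_sub_const_self
    · exact analyticOrderAt_id_sub_const_of_ne hzx
  have hmul := analyticOrderAt_mul (hsub.pow n) (hg.analyticAt (hU.mem_nhds hz))
  rw [analyticOrderAt_pow hsub, hpow, nsmul_eq_mul, mul_ite, mul_one, mul_zero] at hmul
  rw [ordAt_eq_analyticOrderAt, ordAt_eq_analyticOrderAt,
    analyticOrderAt_congr (hF.eventuallyEq_of_mem (hU.mem_nhds hz))]
  exact hmul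

lemma solCount_eq_add_of_eqOn_pow_mul {g : ℂ → ℂ} {n : ℕ} {x : ℂ} (hU : IsOpen U) (hx : x ∈ U)
    (hg : DifferentiableOn ℂ g U) (hF : EqOn F (fun z => (z - x) ^ n * g z) U) :
    solCount F U = n + solCount g U := by
  classical
  calc solCount F U = ∑' z : U, ((if z = ⟨x, hx⟩ then (n : ℕ∞) else 0) + ordAt g z) :=
        tsum_congr fun z => by
          simp only [ordAt_eq_add_of_eqOn_pow_mul hU hg hF z.2, Subtype.ext_iff]
    _ = n + solCount g U := by
        rw [(summable_enat _).tsum_add (summable_enat _), tsum_ite_eq, solCount]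

lemma eq_sub_mul_dslope {x : ℂ} (hFx : F x = 0) (z : ℂ) : F z = (z - x) * dslope F x z := by
  simpa [hFx] using (sub_smul_dslope F x z).symm

lemma solCount_eq_one_add_solCount_dslope {x : ℂ} (hU : IsOpen U) (hx : x ∈ U)
    (hF : DifferentiableOn ℂ F U) (hFx : F x = 0) :
    solCount F U = 1 + solCount (dslope F x) U := by
  rw [← Nat.cast_one]
  refine solCount_eq_add_of_eqOn_pow_mul hU hx
    ((Complex.differentiableOn_dslope (hU.mem_nhds hx)).2 hF) fun z _ => ?_
  simpa only [pow_one] using eq_sub_mul_dslope hFx z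

lemma exists_eqOn_eval_mul (hU : IsOpen U) {n : ℕ} (hF : DifferentiableOn ℂ F U)
    (hn : solCount F U ≤ n) :
    ∃ (Q : Polynomial ℂ) (G : ℂ → ℂ), Q.Monic ∧ Q.natDegree ≤ n ∧ (∀ x ∈ Q.roots, x ∈ U) ∧
      DifferentiableOn ℂ G U ∧ (∀ z ∈ U, G z ≠ 0) ∧ EqOn F (fun z => Q.eval z * G z) U := by
  induction n generalizing F with
  | zero =>
    refine ⟨1, F, Polynomial.monic_one, by simp, by simp, hF, fun x hx hFx => ?_, by simp [EqOn]⟩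
    simp [solCount_eq_one_add_solCount_dslope hU hx hF hFx] at hn
  | succ n ih =>
    by_cases hzero : ∃ x ∈ U, F x = 0
    · obtain ⟨x, hx, hFx⟩ := hzero
      rw [solCount_eq_one_add_solCount_dslope hU hx hF hFx, add_comm, Nat.cast_succ,
        ENat.add_le_add_iff_right ENat.one_ne_top] at hn
      obtain ⟨Q, G, hQ, hdeg, hroots, hG, hG₀, hQG⟩ :=
        ih ((Complex.differentiableOn_dslope (hU.mem_nhds hx)).2 hF) hn
      refine ⟨(Polynomial.X - Polynomial.C x) * Q, G, (Polynomial.monic_X_sub_C x).mul hQ, ?_, ?_,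
        hG, hG₀, fun z hz => ?_⟩
      · rw [(Polynomial.monic_X_sub_C x).natDegree_mul hQ, Polynomial.natDegree_X_sub_C]
        omega
      · rw [Polynomial.roots_mul ((Polynomial.monic_X_sub_C x).mul hQ).ne_zero]
        simpa [hx] using hroots
      · simp [eq_sub_mul_dslope hFx z, hQG hz, mul_assoc]
    · push Not at hzero
      exact ⟨1, F, Polynomial.monic_one, by simp, by simp, hF, hzero, by simp [EqOn]⟩

lemma encard_setOf_eq_zero_le (hU : IsOpen U) {n : ℕ} (hF : DifferentiableOn ℂ F U)
    (hn : solCount F U ≤ n) : {z ∈ U | F z = 0}.encard ≤ n := by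
  obtain ⟨Q, G, hQ, hdeg, -, -, hG₀, hQG⟩ := exists_eqOn_eval_mul hU hF hn
  have hsub : {z ∈ U | F z = 0} ⊆ Q.roots.toFinset := fun z ⟨hz, hFz⟩ => by
    have heval : Q.eval z = 0 := (mul_eq_zero.1 ((hQG hz).symm.trans hFz)).resolve_right (hG₀ z hz)
    simp [hQ.ne_zero, heval]
  calc {z ∈ U | F z = 0}.encard ≤ (Q.roots.toFinset : Set ℂ).encard := encard_le_encard hsub
    _ = Q.roots.toFinset.card := encard_coe_eq_coe_finsetCard _
    _ ≤ n := by
        exact_mod_cast (Multiset.toFinset_card_le _).trans ((Polynomial.card_roots' Q).trans hdeg)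

lemma IsSPValentOn.solCount_sub_const_le {f : ℂ → ℂ} {p : ℕ} (hf : IsSPValentOn f U 0 p) (c : ℂ) :
    solCount (fun z => f z - c) U ≤ p := by
  simpa using hf (Polynomial.C c) Polynomial.degree_C_le

lemma IsSPValentOn.isMultivalentOn_sub_const {f : ℂ → ℂ} {p : ℕ} (hU : IsOpen U)
    (hdiff : DifferentiableOn ℂ f U) (hf : IsSPValentOn f U 0 p) (c : ℂ) :
    IsMultivalentOn (fun z => f z - c) U p := by
  intro w
  simpa [sub_eq_zero, sub_eq_iff_eq_add] using
    encard_setOf_eq_zero_le hU (hdiff.sub_const (w + c)) (hf.solCount_sub_const_le (w + c))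

lemma norm_eval_le_pow_natDegree {Q : Polynomial ℂ} (hQ : Q.Monic) {z : ℂ} {r : ℝ}
    (hr : ∀ x ∈ Q.roots, ‖z - x‖ ≤ r) : ‖Q.eval z‖ ≤ r ^ Q.natDegree := by
  have hsplits : Q.Splits := IsAlgClosed.splits Q
  rw [hsplits.eval_eq_prod_roots_of_monic hQ, hsplits.natDegree_eq_card_roots,
    ← Q.roots.card_map (z - ·)]
  refine (map_multiset_prod (normHom : ℂ →*₀ ℝ) _).trans_le <|
    Multiset.prod_map_le_pow_card (fun x _ => norm_nonneg x) fun x hx => ?_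
  obtain ⟨y, hy, rfl⟩ := Multiset.mem_map.1 hx
  exact hr y hy

end ZeroCounting

section PowerSeries

variable {a : ℕ → ℂ} {f : ℂ → ℂ} {R : ℝ}

lemma hasFPowerSeriesOnBall_ofScalars (hR : 0 < R)
    (hf : ∀ z ∈ Metric.ball 0 R, HasSum (fun k => a k * z ^ k) (f z)) :
    HasFPowerSeriesOnBall f (FormalMultilinearSeries.ofScalars ℂ a) 0 (ENNReal.ofReal R) := by
  refine ⟨ENNReal.le_of_forall_nnreal_lt fun r hr => ?_, ENNReal.ofReal_pos.2 hR, fun {y} hy => ?_⟩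
  · have hrR : (r : ℝ) < R := by simpa [Real.lt_toNNReal_iff_coe_lt] using! hr
    refine FormalMultilinearSeries.le_radius_of_tendsto _ (l := 0) ?_
    have hlim := (hf (r : ℂ) (by simpa using hrR)).summable.tendsto_atTop_zero.norm
    simpa [FormalMultilinearSeries.ofScalars_norm] using hlim
  · rw [Metric.eball_ofReal] at hy
    simpa [FormalMultilinearSeries.ofScalars_apply_eq, mul_comm] using hf y hy

lemma differentiableOn_of_hasSum (hR : 0 < R)
    (hf : ∀ z ∈ Metric.ball 0 R, HasSum (fun k => a k * z ^ k) (f z)) :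
    DifferentiableOn ℂ f (Metric.ball 0 R) := by
  rw [← Metric.eball_ofReal]
  exact (hasFPowerSeriesOnBall_ofScalars hR hf).differentiableOn

lemma iteratedDeriv_eq_of_hasSum (hR : 0 < R)
    (hf : ∀ z ∈ Metric.ball 0 R, HasSum (fun k => a k * z ^ k) (f z)) (n : ℕ) :
    iteratedDeriv n f 0 = n.factorial * a n := by
  rw [iteratedDeriv_eq_iteratedFDeriv,
    ← (hasFPowerSeriesOnBall_ofScalars hR hf).factorial_smul (1 : ℂ) n]
  simp

lemma iteratedDeriv_natDegree_eval_of_monic {Q : Polynomial ℂ} (hQ : Q.Monic) :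
    iteratedDeriv Q.natDegree (fun z => Q.eval z) 0 = Q.natDegree.factorial := by
  have hsum (z : ℂ) : HasSum (fun k => Q.coeff k * z ^ k) (Q.eval z) := by
    rw [Polynomial.eval_eq_sum_range]
    refine hasSum_sum_of_ne_finset_zero fun k hk => ?_
    rw [Polynomial.coeff_eq_zero_of_natDegree_lt (by simpa using hk), zero_mul]
  rw [iteratedDeriv_eq_of_hasSum one_pos fun z _ => hsum z, Polynomial.coeff_natDegree,
    hQ.leadingCoeff, mul_one]

lemma norm_coeff_mul_pow_le {c : ℂ} {r C : ℝ} {k : ℕ} (hr : 0 < r) (hrR : r < R) (hk : 0 < k)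
    (hf : ∀ z ∈ Metric.ball 0 R, HasSum (fun k => a k * z ^ k) (f z))
    (hC : ∀ z ∈ Metric.sphere 0 r, ‖f z - c‖ ≤ C) : ‖a k‖ * r ^ k ≤ C := by
  have hR := hr.trans hrR
  have hdiff : DifferentiableOn ℂ (fun z => -c + f z) (Metric.ball 0 R) :=
    (differentiableOn_of_hasSum hR hf).const_add (-c)
  have hcauchy := Complex.norm_iteratedDeriv_le_of_forall_mem_sphere_norm_le k hr
    (hdiff.diffContOnCl_ball (Metric.closedBall_subset_ball hrR))
    (by simpa only [neg_add_eq_sub] using hC)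
  rw [iteratedDeriv_const_add hk, iteratedDeriv_eq_of_hasSum hR hf, norm_mul, Complex.norm_natCast,
    mul_div_assoc] at hcauchy
  exact (le_div_iff₀ (pow_pos hr k)).1 (le_of_mul_le_mul_left hcauchy (by positivity))

/-- The power series `∑ aₙ₊ₖ zᵏ` with the first `n` coefficients shifted out; for `n = s` it is
the lower truncation `f̂` of the theorem up to the constant `aₛ`. -/
noncomputable def taylorShift (a : ℕ → ℂ) (n : ℕ) (z : ℂ) : ℂ := ∑' k, a (n + k) * z ^ k

lemma hasSum_taylorShift {z w : ℂ} (hz : HasSum (fun k => a k * z ^ k) w) (n : ℕ) :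
    HasSum (fun k => a (n + k) * z ^ k) (taylorShift a n z) := by
  refine Summable.hasSum ?_
  rcases eq_or_ne z 0 with rfl | hz₀
  · exact summable_of_ne_finset_zero (s := {0}) fun k hk => by simp_all
  · rw [← summable_mul_left_iff (pow_ne_zero n hz₀)]
    refine ((summable_nat_add_iff n).2 hz.summable).congr fun k => ?_
    rw [add_comm k n]
    ring

lemma eq_sum_add_pow_mul_taylorShift {z w : ℂ} (hz : HasSum (fun k => a k * z ^ k) w) (n : ℕ) :
    w = ∑ i ∈ Finset.range n, a i * z ^ i + z ^ n * taylorShift a n z := by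
  rw [← hz.tsum_eq, ← hz.summable.sum_add_tsum_nat_add n, taylorShift, ← tsum_mul_left]
  refine congrArg _ (tsum_congr fun k => ?_)
  rw [add_comm k n]
  ring

lemma natCast_le_analyticOrderAt_sub_sum (hR : 0 < R)
    (hf : ∀ z ∈ Metric.ball 0 R, HasSum (fun k => a k * z ^ k) (f z)) (n : ℕ) :
    n ≤ analyticOrderAt (fun z => f z - ∑ i ∈ Finset.range n, a i * z ^ i) 0 := by
  have hnhds : Metric.ball (0 : ℂ) R ∈ 𝓝 0 := Metric.ball_mem_nhds 0 hR
  have hfa : AnalyticAt ℂ f 0 := (differentiableOn_of_hasSum hR hf).analyticAt hnhds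
  rw [natCast_le_analyticOrderAt (by fun_prop)]
  refine ⟨taylorShift a n, (differentiableOn_of_hasSum hR fun z hz =>
    hasSum_taylorShift (hf z hz) n).analyticAt hnhds, ?_⟩
  filter_upwards [hnhds] with z hz
  rw [eq_sum_add_pow_mul_taylorShift (hf z hz) n, add_sub_cancel_left, sub_zero, smul_eq_mul]

lemma degree_sum_range_add_le (a : ℕ → ℂ) (c : ℂ) (s : ℕ) :
    (∑ i ∈ Finset.range s, Polynomial.C (a i) * Polynomial.X ^ i +
      Polynomial.C c * Polynomial.X ^ s).degree ≤ ((s : ℕ) : WithBot ℕ) := by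
  refine Polynomial.degree_add_le_of_degree_le ?_ (Polynomial.degree_C_mul_X_pow_le s c)
  refine (Polynomial.degree_sum_le _ _).trans (Finset.sup_le fun i hi => ?_)
  refine (Polynomial.degree_C_mul_X_pow_le i _).trans ?_
  exact_mod_cast (Finset.mem_range.1 hi).le

lemma isSPValentOn_taylorShift {s m : ℕ} (hR : 0 < R)
    (hf : ∀ z ∈ Metric.ball 0 R, HasSum (fun k => a k * z ^ k) (f z))
    (hv : IsSPValentOn f (Metric.ball 0 R) s (s + m)) :
    IsSPValentOn (taylorShift a s) (Metric.ball 0 R) 0 m := by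
  intro P hP
  rw [Polynomial.eq_C_of_degree_le_zero hP]
  set c := P.coeff 0
  have hcount := hv _ (degree_sum_range_add_le a c s)
  rw [solCount_eq_add_of_eqOn_pow_mul (x := 0) (n := s)
    (g := fun z => taylorShift a s z - (Polynomial.C c).eval z) Metric.isOpen_ball
    (Metric.mem_ball_self hR) (DifferentiableOn.sub (differentiableOn_of_hasSum hR fun z hz =>
      hasSum_taylorShift (hf z hz) s) (by fun_prop)) fun z hz => ?_, Nat.cast_add] at hcount
  · exact (ENat.add_le_add_iff_left (ENat.natCast_ne_top s)).1 hcount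
  · simp only [Polynomial.eval_add, Polynomial.eval_finsetSum, Polynomial.eval_mul,
      Polynomial.eval_C, Polynomial.eval_pow, Polynomial.eval_X, sub_zero]
    rw [eq_sum_add_pow_mul_taylorShift (hf z hz) s]
    ring

end PowerSeries

section SmallValue

lemma iteratedDeriv_eq_of_natCast_lt_analyticOrderAt_sub {f g : ℂ → ℂ} {x : ℂ} {n : ℕ}
    (hf : AnalyticAt ℂ f x) (hg : AnalyticAt ℂ g x) (hn : n < analyticOrderAt (f - g) x) :
    iteratedDeriv n f x = iteratedDeriv n g x := by
  have hzero := (natCast_le_analyticOrderAt_iff_iteratedDeriv_eq_zero (hf.sub hg)).1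
    (Order.add_one_le_of_lt hn) n n.lt_succ_self
  rwa [iteratedDeriv_sub hf.contDiffAt hg.contDiffAt, sub_eq_zero] at hzero

variable {R ρ : ℝ}

lemma exists_mem_sphere_norm_iteratedDeriv_mul_pow_le {g : ℂ → ℂ} (hρ : 0 < ρ) (hρR : ρ < R)
    (hg : DifferentiableOn ℂ g (Metric.ball 0 R)) (n : ℕ) :
    ∃ z ∈ Metric.sphere 0 ρ, ‖iteratedDeriv n g 0‖ * ρ ^ n ≤ n.factorial * ‖g z‖ := by
  have hsub := Metric.closedBall_subset_ball (x := (0 : ℂ)) hρR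
  obtain ⟨z, hz, hmax⟩ := (isCompact_sphere (0 : ℂ) ρ).exists_isMaxOn
    (NormedSpace.sphere_nonempty.2 hρ.le)
    (hg.continuousOn.mono (Metric.sphere_subset_closedBall.trans hsub)).norm
  have hcauchy := Complex.norm_iteratedDeriv_le_of_forall_mem_sphere_norm_le n hρ
    (hg.diffContOnCl_ball hsub) hmax
  exact ⟨z, hz, (le_div_iff₀ (pow_pos hρ n)).1 hcauchy⟩

lemma iteratedDeriv_div_eq_factorial_natDegree {F G P : ℂ → ℂ} {Q : Polynomial ℂ} {U : Set ℂ}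
    (hU : U ∈ 𝓝 0) (hQ : Q.Monic) (hF : DifferentiableOn ℂ F U) (hG : DifferentiableOn ℂ G U)
    (hP : DifferentiableOn ℂ P U) (hG₀ : ∀ z ∈ U, G z ≠ 0)
    (hFQG : EqOn F (fun z => Q.eval z * G z) U) (horder : Q.natDegree < analyticOrderAt (F - P) 0) :
    iteratedDeriv Q.natDegree (fun z => P z / G z) 0 = Q.natDegree.factorial := by
  have hEq : (fun z => Q.eval z) - (fun z => P z / G z) =ᶠ[𝓝 0] (F - P) * fun z => (G z)⁻¹ := by
    filter_upwards [hU] with z hz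
    have hGz := hG₀ z hz
    simp only [Pi.sub_apply, Pi.mul_apply, hFQG hz]
    field_simp
  have hquot : DifferentiableOn ℂ (fun z => P z / G z) U := hP.div hG hG₀
  have hinv : DifferentiableOn ℂ (fun z => (G z)⁻¹) U := hG.inv hG₀
  rw [← iteratedDeriv_natDegree_eval_of_monic hQ]
  refine (iteratedDeriv_eq_of_natCast_lt_analyticOrderAt_sub
    (Q.differentiable.analyticAt 0) (hquot.analyticAt hU) ?_).symm
  rw [analyticOrderAt_congr hEq,
    analyticOrderAt_mul ((hF.analyticAt hU).sub (hP.analyticAt hU)) (hinv.analyticAt hU)]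
  exact horder.trans_le le_self_add

/- Write `F = Q G` with `Q` monic and `G` zero-free. As `P / G` agrees with `Q` to order `n` at `0`,
its derivative of order `deg Q` is `(deg Q)!` there, so Cauchy's estimate bounds `P / G` below. -/
lemma exists_mem_sphere_norm_le_pow_mul_norm {F P : ℂ → ℂ} {n : ℕ} (hρ : 0 < ρ) (hρR : ρ < R)
    (hF : DifferentiableOn ℂ F (Metric.ball 0 R)) (hP : DifferentiableOn ℂ P (Metric.ball 0 R))
    (hcount : solCount F (Metric.ball 0 R) ≤ n) (horder : n < analyticOrderAt (F - P) 0) :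
    ∃ z ∈ Metric.sphere 0 ρ, ‖F z‖ ≤ (2 * R / ρ) ^ n * ‖P z‖ := by
  obtain ⟨Q, G, hQ, hdeg, hroots, hG, hG₀, hFQG⟩ :=
    exists_eqOn_eval_mul Metric.isOpen_ball hF hcount
  have hnhds : Metric.ball (0 : ℂ) R ∈ 𝓝 0 := Metric.ball_mem_nhds 0 (hρ.trans hρR)
  have hPG : DifferentiableOn ℂ (fun z => P z / G z) (Metric.ball 0 R) := hP.div hG hG₀
  have hderiv := iteratedDeriv_div_eq_factorial_natDegree hnhds hQ hF hG hP hG₀ hFQG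
    ((Nat.cast_le.2 hdeg).trans_lt horder)
  obtain ⟨z, hz, hmax⟩ := exists_mem_sphere_norm_iteratedDeriv_mul_pow_le hρ hρR hPG Q.natDegree
  rw [hderiv, Complex.norm_natCast, norm_div] at hmax
  have hzR : z ∈ Metric.ball 0 R := Metric.sphere_subset_ball hρR hz
  have hGz : 0 < ‖G z‖ := norm_pos_iff.2 (hG₀ z hzR)
  have hlower : ρ ^ Q.natDegree * ‖G z‖ ≤ ‖P z‖ :=
    (le_div_iff₀ hGz).1 (le_of_mul_le_mul_left hmax (by positivity))
  have hdist (x : ℂ) (hx : x ∈ Q.roots) : ‖z - x‖ ≤ 2 * R := by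
    have hxR := mem_ball_zero_iff.1 (hroots x hx)
    linarith [norm_sub_le z x, mem_ball_zero_iff.1 hzR]
  have hone : 1 ≤ 2 * R / ρ := (one_le_div hρ).2 (by linarith)
  refine ⟨z, hz, ?_⟩
  calc ‖F z‖ = ‖Q.eval z‖ * ‖G z‖ := by rw [hFQG hzR, norm_mul]
    _ ≤ (2 * R) ^ Q.natDegree * ‖G z‖ := by gcongr; exact norm_eval_le_pow_natDegree hQ hdist
    _ = (2 * R / ρ) ^ Q.natDegree * (ρ ^ Q.natDegree * ‖G z‖) := by rw [div_pow]; field_simp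
    _ ≤ (2 * R / ρ) ^ n * ‖P z‖ := by gcongr

end SmallValue

section Coefficients

variable {a : ℕ → ℂ} {f : ℂ → ℂ} {R μ : ℝ} {p : ℕ}

lemma norm_sum_Icc_mul_pow_le {z : ℂ} (hz : ‖z‖ ≤ R)
    (hμ : ∀ i ∈ Finset.Icc 1 p, ‖a i‖ * R ^ i ≤ μ) :
    ‖∑ i ∈ Finset.Icc 1 p, a i * z ^ i‖ ≤ p * μ := by
  have hterm (i : ℕ) (hi : i ∈ Finset.Icc 1 p) : ‖a i * z ^ i‖ ≤ μ := by
    rw [norm_mul, norm_pow]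
    exact (by gcongr : ‖a i‖ * ‖z‖ ^ i ≤ ‖a i‖ * R ^ i).trans (hμ i hi)
  simpa using norm_sum_le_of_le (Finset.Icc 1 p) hterm

lemma exists_mem_sphere_norm_sub_le {ρ : ℝ} (hρ : ρ ∈ Ioo (R / 4) (R / 2))
    (hf : ∀ z ∈ Metric.ball 0 R, HasSum (fun k => a k * z ^ k) (f z))
    (hv : IsSPValentOn f (Metric.ball 0 R) 0 p)
    (hμ : ∀ i ∈ Finset.Icc 1 p, ‖a i‖ * R ^ i ≤ μ) :
    ∃ z ∈ Metric.sphere 0 ρ, ‖f z - a 0‖ ≤ 8 ^ p * (p * μ) := by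
  obtain ⟨hlow, hhigh⟩ := hρ
  have hR : 0 < R := by linarith
  have hρ₀ : 0 < ρ := by linarith
  have horder : p < analyticOrderAt
      ((fun z => f z - a 0) - fun z => ∑ i ∈ Finset.Icc 1 p, a i * z ^ i) 0 := by
    have hsplit : ((fun z => f z - a 0) - fun z => ∑ i ∈ Finset.Icc 1 p, a i * z ^ i) =
        fun z => f z - ∑ i ∈ Finset.range (p + 1), a i * z ^ i := by
      funext z
      rw [Pi.sub_apply, Finset.range_eq_Ico, Finset.sum_eq_sum_Ico_succ_bot p.succ_pos, pow_zero,
        mul_one, sub_sub]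
      rfl
    rw [hsplit]
    exact (Nat.cast_lt.2 p.lt_succ_self).trans_le (natCast_le_analyticOrderAt_sub_sum hR hf (p + 1))
  obtain ⟨z, hz, hle⟩ := exists_mem_sphere_norm_le_pow_mul_norm (R := R) hρ₀ (by linarith)
    ((differentiableOn_of_hasSum hR hf).sub_const (a 0)) (by fun_prop)
    (hv.solCount_sub_const_le (a 0)) horder
  refine ⟨z, hz, hle.trans ?_⟩
  gcongr
  · rw [div_le_iff₀ hρ₀]
    linarith
  · exact norm_sum_Icc_mul_pow_le (by linarith [mem_sphere_zero_iff_norm.1 hz]) hμ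

-- The radius `R k / (k + 1)` balances the growth of `f` against the factor `(R / r) ^ k ≤ e`.
theorem norm_coeff_mul_pow_le_of_isSPValentOn {k : ℕ} (hk : 1 ≤ k) (hR : 0 < R)
    (hf : ∀ z ∈ Metric.ball 0 R, HasSum (fun k => a k * z ^ k) (f z))
    (hv : IsSPValentOn f (Metric.ball 0 R) 0 p)
    (hμ : ∀ i ∈ Finset.Icc 1 p, ‖a i‖ * R ^ i ≤ μ) :
    ‖a k‖ * R ^ k ≤
      Real.exp 1 * (8 ^ p * (p * μ) * Real.exp (602 * p) * (2 * k + 1) ^ (2 * p)) := by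
  have hdiff := differentiableOn_of_hasSum hR hf
  have hk₀ : (0 : ℝ) < k := by exact_mod_cast hk
  set r : ℝ := R / (1 + (k : ℝ)⁻¹) with hr_def
  have hr : 0 < r := by positivity
  have hrR : r < R := div_lt_self hR (by simpa using hk₀)
  have hratio : (R + r) / (R - r) = 2 * k + 1 := by
    rw [div_eq_iff (sub_pos.2 hrR).ne', hr_def]
    field_simp
    ring
  have hbound (z : ℂ) (hz : z ∈ Metric.sphere 0 r) : ‖f z - a 0‖ ≤
      8 ^ p * (p * μ) * Real.exp (602 * p) * (2 * k + 1) ^ (2 * p) := by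
    rw [← hratio, ← mem_sphere_zero_iff_norm.1 hz]
    exact norm_le_of_isMultivalentOn_ball (hdiff.sub_const (a 0))
      (hv.isMultivalentOn_sub_const Metric.isOpen_ball hdiff (a 0))
      (fun ρ hρ => exists_mem_sphere_norm_sub_le hρ hf hv hμ)
      (Metric.sphere_subset_ball hrR hz)
  calc ‖a k‖ * R ^ k = (1 + (k : ℝ)⁻¹) ^ k * (‖a k‖ * r ^ k) := by
        rw [hr_def, div_pow]
        field_simp
    _ ≤ Real.exp 1 * (8 ^ p * (p * μ) * Real.exp (602 * p) * (2 * k + 1) ^ (2 * p)) :=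
        mul_le_mul Real.one_add_inv_pow_le_exp (norm_coeff_mul_pow_le hr hrR hk hf hbound)
          (by positivity) (Real.exp_pos 1).le

end Coefficients

theorem statement0_general (m : ℕ) (hm : 0 < m) :
    ∃ A : ℝ, 0 < A ∧
      ∀ (R : ℝ) (a : ℕ → ℂ) (f : ℂ → ℂ) (s : ℕ), 0 < R →
        (∀ z ∈ Metric.ball (0 : ℂ) R, HasSum (fun k => a k * z ^ k) (f z)) →
        IsSPValentOn f (Metric.ball (0 : ℂ) R) s (s + m) →
        ∀ k : ℕ, 1 ≤ k →
          ‖a (s + k)‖ * R ^ k ≤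
            (A * k / m) ^ (2 * m) *
              (Finset.Icc 1 m).sup' (Finset.nonempty_Icc.mpr hm)
                (fun i => ‖a (s + i)‖ * R ^ i) := by
  set C : ℝ := max 1 (Real.exp 1 * 8 ^ m * m * Real.exp (602 * m))
  refine ⟨3 * m * C, by positivity, fun R a f s hR hf hv k hk => ?_⟩
  set μ := (Finset.Icc 1 m).sup' (Finset.nonempty_Icc.mpr hm) (fun i => ‖a (s + i)‖ * R ^ i)
  have hμ (i : ℕ) (hi : i ∈ Finset.Icc 1 m) : ‖a (s + i)‖ * R ^ i ≤ μ :=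
    Finset.le_sup' (fun i => ‖a (s + i)‖ * R ^ i) hi
  have hμ₀ : 0 ≤ μ := (by positivity : 0 ≤ ‖a (s + 1)‖ * R ^ 1).trans
    (hμ 1 (Finset.mem_Icc.2 ⟨le_rfl, hm⟩))
  have hk₀ : (1 : ℝ) ≤ k := by exact_mod_cast hk
  have hcoeff := norm_coeff_mul_pow_le_of_isSPValentOn (a := fun i => a (s + i)) hk hR
    (fun z hz => hasSum_taylorShift (hf z hz) s) (isSPValentOn_taylorShift hR hf hv) hμ
  calc ‖a (s + k)‖ * R ^ k
      ≤ Real.exp 1 * 8 ^ m * m * Real.exp (602 * m) * (2 * k + 1) ^ (2 * m) * μ := by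
        linarith only [hcoeff]
    _ ≤ C ^ (2 * m) * (3 * k) ^ (2 * m) * μ := by
        gcongr
        · exact (le_max_right _ _).trans (le_self_pow₀ (le_max_left _ _) (by omega))
        · linarith
    _ = (3 * m * C * k / m) ^ (2 * m) * μ := by
        rw [← mul_pow]
        congr 2
        field_simp

/-- For every positive integer `m` there is a constant `A_m > 0` such that whenever
`f(z) = ∑ a_k z^k` (converging on a disk of radius strictly larger than `R`) is
`(s,p)`-valent in `D_R` with `p = s + m`, the lower `s`-truncation
`f̂(z) = ∑_{k ≥ 1} a_{s+k} z^k` possesses the `(m, R, (A_m k/m)^{2m})`-Taylor domination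
property. -/
theorem statement0 (m : ℕ) (hm : 0 < m) :
    ∃ A : ℝ, 0 < A ∧
      ∀ (R : ℝ) (a : ℕ → ℂ) (f : ℂ → ℂ) (s p : ℕ), 0 < R →
        p = s + m →
        (∃ R' : ℝ, R < R' ∧ ∀ z : ℂ, ‖z‖ < R' →
          Summable (fun k => a k * z ^ k)) →
        (∀ z ∈ Metric.ball (0 : ℂ) R, HasSum (fun k => a k * z ^ k) (f z)) →
        IsSPValentOn f (Metric.ball (0 : ℂ) R) s p →
        ∀ k : ℕ, m + 1 ≤ k →
          ‖a (s + k)‖ * R ^ k ≤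
            (A * k / m) ^ (2 * m) *
              (Finset.Icc 1 m).sup' (Finset.nonempty_Icc.mpr hm)
                (fun i => ‖a (s + i)‖ * R ^ i) := by
  obtain ⟨A, hA, hgeneral⟩ := statement0_general m hm
  exact ⟨A, hA, fun R a f s p hR hp _ hf hv k hk =>
    hgeneral R a f s hR hf (hp ▸ hv) k (by omega)⟩
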